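/- arXiv:1903.11051 — 7 statements merged into one kernel-verified Lean document; each statement's English description precedes it below -/
import Mathlib

section
/- Let k be a field, A a finite-dimensional k-algebra, and k' a finite Galois extension of k with Galois group Γ = Gal(k'/k), acting on the k'-algebra A ⊗_k k' through the second tensor factor. Then the first (nonabelian) cohomology of Γ with values in the unit group (A ⊗_k k')^× is trivial: for every map c : Γ → (A ⊗_k k')^× satisfying the cocycle condition c(στ) = c(σ) · σ(c(τ)) for all σ, τ ∈ Γ, there exists b ∈ (A ⊗_k k')^× such that c(σ) = b · σ(b)⁻¹ for all σ ∈ Γ. -/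
open scoped TensorProduct

/-- The action of `σ ∈ Gal(k'/k)` on `A ⊗[k] k'` through the second tensor factor. -/
noncomputable def tensorGalAut (k : Type*) [Field k] (k' : Type*) [Field k'] [Algebra k k']
    (A : Type*) [Ring A] [Algebra k A] (σ : k' ≃ₐ[k] k') :
    (A ⊗[k] k') ≃ₐ[k] (A ⊗[k] k') :=
  Algebra.TensorProduct.congr AlgEquiv.refl σ

/-- The induced action of `σ ∈ Gal(k'/k)` on the unit group `(A ⊗[k] k')ˣ`. -/
noncomputable def tensorGalActUnits (k : Type*) [Field k] (k' : Type*) [Field k'] [Algebra k k']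
    (A : Type*) [Ring A] [Algebra k A] (σ : k' ≃ₐ[k] k') :
    (A ⊗[k] k')ˣ →* (A ⊗[k] k')ˣ :=
  Units.map (tensorGalAut k k' A σ).toAlgHom.toRingHom.toMonoidHom

/-!
Twist the Galois action on `A ⊗[k] k'` by the cocycle: `x ↦ σ(x) * c(σ)⁻¹` is semilinear over `k'`
and linear over `A`, so its invariants form an `A`-submodule `M`, and Galois descent for a basis of
`k'` over `k` of size `n` gives `Mⁿ ≃ A ⊗[k] k' ≃ Aⁿ` as `A`-modules. Such an isomorphism forces
`M ≃ A`: modulo the Jacobson radical the modules are semisimple of finite length, where simple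
summands cancel, and the resulting isomorphism lifts because `Aⁿ`, hence `M`, is projective. If
`m ∈ M` corresponds to `1 ∈ A`, the two isomorphisms compose to right multiplication by `m` on
`A ⊗[k] k'`, so `m` is a unit. Invariance reads `σ(m) = m * c(σ)`, and `b = m⁻¹` splits the cocycle.
-/

section Cancellation

variable {R : Type*} [Ring R]
variable {T : Type*} [AddCommGroup T] [Module R T]
variable {M : Type*} [AddCommGroup M] [Module R M]
variable {N : Type*} [AddCommGroup N] [Module R N]

open LinearMap

theorem bijective_snd_comp_symm_comp_inr (e : (T × M) ≃ₗ[R] (T × N))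
    (he : Function.Bijective (fst R T N ∘ₗ e.toLinearMap ∘ₗ inl R T M)) :
    Function.Bijective (snd R T M ∘ₗ e.symm.toLinearMap ∘ₗ inr R T N) := by
  refine ⟨(injective_iff_map_eq_zero _).mpr fun y hy ↦ ?_, fun x ↦ ?_⟩
  · obtain ⟨t, ht⟩ : ∃ t, e.symm (0, y) = (t, 0) := ⟨_, Prod.ext rfl hy⟩
    have het : e (t, 0) = (0, y) := by rw [← ht, e.apply_symm_apply]
    have ht0 : t = 0 := (injective_iff_map_eq_zero _).mp he.1 t (congr_arg Prod.fst het)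
    rw [ht0, Prod.mk_zero_zero, map_zero] at het
    exact (congr_arg Prod.snd het).symm
  · obtain ⟨t, ht⟩ := he.2 (-(e (0, x)).1)
    have het : e (t, x) = (0, (e (t, x)).2) := by
      refine Prod.ext ?_ rfl
      have hsum : (t, x) = (t, 0) + (0, x) := by simp
      rw [hsum, map_add, Prod.fst_add]
      exact (congr_arg (· + (e (0, x)).1) ht).trans (neg_add_cancel _)
    exact ⟨(e (t, x)).2, by simp [← het]⟩

theorem nonempty_linearEquiv_of_simple_prod [IsSimpleModule R T]
    (e : (T × M) ≃ₗ[R] (T × N)) : Nonempty (M ≃ₗ[R] N) := by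
  suffices ∃ e' : (T × M) ≃ₗ[R] (T × N),
      Function.Bijective (fst R T N ∘ₗ e'.toLinearMap ∘ₗ inl R T M) from
    let ⟨e', he'⟩ := this
    ⟨(LinearEquiv.ofBijective _ (bijective_snd_comp_symm_comp_inr e' he')).symm⟩
  obtain he | he := (fst R T N ∘ₗ e.toLinearMap ∘ₗ inl R T M).bijective_or_eq_zero
  · exact ⟨e, he⟩
  -- If `e` has zero `T`-`T` block, shearing by the `T`-`M` block of `e⁻¹` makes that block `1`.
  let h : T →ₗ[R] M := snd R T M ∘ₗ e.symm.toLinearMap ∘ₗ inl R T N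
  refine ⟨((LinearEquiv.refl R T).skewProd (LinearEquiv.refl R M) h).trans e, ?_⟩
  convert! Function.bijective_id using 1
  funext t
  have hfst (s : T) : (e (s, 0)).1 = 0 := congr($he s)
  have hsplit : (t, h t) = (t - (e.symm (t, 0)).1, 0) + e.symm (t, 0) := by
    ext <;> simp [h]
  simp [hsplit, hfst]

theorem nonempty_linearEquiv_quotient_prod [IsSemisimpleModule R M] (P : Submodule R M) :
    Nonempty (M ≃ₗ[R] (M ⧸ P) × P) :=
  have ⟨Q, hPQ⟩ := exists_isCompl P
  ⟨(Submodule.prodEquivOfIsCompl Q P hPQ.symm).symm.trans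
    ((P.quotientEquivOfIsCompl Q hPQ).symm.prodCongr (LinearEquiv.refl R P))⟩

theorem nonempty_linearEquiv_of_semisimple_prod [hss : IsSemisimpleModule R T]
    (hT : IsFiniteLength R T) (e : (T × M) ≃ₗ[R] (T × N)) : Nonempty (M ≃ₗ[R] N) := by
  induction hT generalizing hss with
  | @of_subsingleton T =>
    have : Unique T := uniqueOfSubsingleton 0
    exact ⟨LinearEquiv.uniqueProd.symm.trans (e.trans LinearEquiv.uniqueProd)⟩
  | @of_simple_quotient T _ _ P _ _ ih =>
    obtain ⟨s⟩ := nonempty_linearEquiv_quotient_prod P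
    let assocM := (s.prodCongr (.refl R M)).trans (LinearEquiv.prodAssoc R (T ⧸ P) P M)
    let assocN := (s.prodCongr (.refl R N)).trans (LinearEquiv.prodAssoc R (T ⧸ P) P N)
    obtain ⟨e'⟩ := nonempty_linearEquiv_of_simple_prod (assocM.symm.trans (e.trans assocN))
    exact ih e'

/-- The linear version of `Equiv.arrowProdEquivProdArrow`, for a constant family. -/
def arrowProdLinearEquiv (ι R M N : Type*) [Semiring R] [AddCommMonoid M] [Module R M]
    [AddCommMonoid N] [Module R N] : (ι → M × N) ≃ₗ[R] (ι → M) × (ι → N) :=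
  { Equiv.arrowProdEquivProdArrow ι (fun _ ↦ M) (fun _ ↦ N) with
    map_add' := fun _ _ ↦ rfl
    map_smul' := fun _ _ ↦ rfl }

theorem nonempty_linearEquiv_simple_prod_quotient [IsSimpleModule R T] [IsSemisimpleModule R N]
    {f : T →ₗ[R] N} (hf : f ≠ 0) : Nonempty (N ≃ₗ[R] T × (N ⧸ range f)) :=
  have ⟨e⟩ := nonempty_linearEquiv_quotient_prod (range f)
  ⟨(e.trans (LinearEquiv.prodComm R _ _)).trans
    ((LinearEquiv.ofInjective f (injective_of_ne_zero hf)).symm.prodCongr (.refl R _))⟩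

theorem isFiniteLength_of_finite [IsSemisimpleModule R M] [Module.Finite R M] :
    IsFiniteLength R M :=
  (IsSemisimpleModule.finite_tfae.out 0 3).mp ‹_›

theorem exists_proj_comp_ne_zero {ι : Type*} {f : M →ₗ[R] (ι → N)} (hf : f ≠ 0) :
    ∃ i, proj i ∘ₗ f ≠ 0 := by
  contrapose! hf
  exact LinearMap.ext fun x ↦ funext fun i ↦ congr($(hf i) x)

theorem nonempty_linearEquiv_of_semisimple_pi {ι : Type*} [Finite ι] [Nonempty ι]
    [hss : IsSemisimpleModule R M] (hM : IsFiniteLength R M) [IsSemisimpleModule R N]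
    (e : (ι → M) ≃ₗ[R] (ι → N)) : Nonempty (M ≃ₗ[R] N) := by
  induction hM generalizing hss N with
  | of_subsingleton =>
    have : Subsingleton (ι → N) := e.symm.injective.subsingleton
    have : Subsingleton N := (Function.const_injective (α := ι)).subsingleton
    exact ⟨0⟩
  | @of_simple_quotient M _ _ P _ _ ih =>
    obtain ⟨s⟩ := nonempty_linearEquiv_quotient_prod P
    have := IsSimpleModule.nontrivial R (M ⧸ P)
    obtain ⟨i⟩ := ‹Nonempty ι›
    let g : (M ⧸ P) →ₗ[R] (ι → N) :=
      e.toLinearMap ∘ₗ LinearMap.pi (fun _ ↦ s.symm.toLinearMap ∘ₗ inl R (M ⧸ P) P)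
    have hg : Function.Injective g := e.injective.comp fun _ _ h ↦
      inl_injective (s.symm.injective (congr_fun h i))
    obtain ⟨j, hj⟩ := exists_proj_comp_ne_zero (ne_zero_of_injective hg)
    obtain ⟨r⟩ := nonempty_linearEquiv_simple_prod_quotient hj
    let splitM := (LinearEquiv.piCongrRight fun _ ↦ s).trans (arrowProdLinearEquiv ι R (M ⧸ P) P)
    let splitN := (LinearEquiv.piCongrRight fun _ ↦ r).trans (arrowProdLinearEquiv ι R (M ⧸ P) _)
    obtain ⟨e'⟩ := nonempty_linearEquiv_of_semisimple_prod isFiniteLength_of_finite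
      (splitM.symm.trans (e.trans splitN))
    obtain ⟨e''⟩ := ih e'
    exact ⟨s.trans ((LinearEquiv.prodCongr (.refl R _) e'').trans r.symm)⟩

end Cancellation

section Radical

variable {R : Type*} [Ring R]
variable {M : Type*} [AddCommGroup M] [Module R M]
variable {N : Type*} [AddCommGroup N] [Module R N]

theorem eq_top_of_sup_jacobson_eq_top [IsCoatomic (Submodule R M)] {P : Submodule R M}
    (h : P ⊔ Module.jacobson R M = ⊤) : P = ⊤ := by
  by_contra hP
  obtain ⟨Q, hQ, hPQ⟩ := (eq_top_or_exists_le_coatom P).resolve_left hP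
  exact hQ.1 (top_le_iff.mp (h ▸ sup_le hPQ (sInf_le hQ)))

theorem jacobson_pi_eq {ι : Type*} [Finite ι] :
    Module.jacobson R (ι → M) = Submodule.pi Set.univ fun _ ↦ Module.jacobson R M := by
  classical
  refine (Module.jacobson_pi_le R _).antisymm ?_
  rw [← Submodule.iSup_map_single]
  exact iSup_le fun i ↦ Module.map_jacobson_le _

theorem nonempty_linearEquiv_pi_quotient_jacobson (ι : Type*) [Finite ι] :
    Nonempty (((ι → M) ⧸ Module.jacobson R (ι → M)) ≃ₗ[R] (ι → M ⧸ Module.jacobson R M)) := by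
  let q : (ι → M) →ₗ[R] (ι → M ⧸ Module.jacobson R M) := (Module.jacobson R M).mkQ.compLeft ι
  have hq : Function.Surjective q := (Submodule.mkQ_surjective _).comp_left
  have hker : LinearMap.ker q = Module.jacobson R (ι → M) := by
    ext x
    simp [q, jacobson_pi_eq, funext_iff]
  exact ⟨(Submodule.quotEquivOfEq _ _ hker.symm).trans (q.quotKerEquivOfSurjective hq)⟩

theorem nonempty_quotient_jacobson_linearEquiv_pi {ι : Type*} [Finite ι]
    (e : (ι → M) ≃ₗ[R] (ι → N)) :
    Nonempty ((ι → M ⧸ Module.jacobson R M) ≃ₗ[R] (ι → N ⧸ Module.jacobson R N)) :=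
  have ⟨eM⟩ := nonempty_linearEquiv_pi_quotient_jacobson (R := R) (M := M) ι
  have ⟨eN⟩ := nonempty_linearEquiv_pi_quotient_jacobson (R := R) (M := N) ι
  ⟨(eM.symm.trans (Submodule.Quotient.equiv _ _ e
    (Module.map_jacobson_of_bijective e.bijective))).trans eN⟩

theorem surjective_of_mkQ_jacobson_comp_surjective [IsCoatomic (Submodule R N)] {f : M →ₗ[R] N}
    (hf : Function.Surjective ((Module.jacobson R N).mkQ ∘ₗ f)) : Function.Surjective f := by
  rw [← LinearMap.range_eq_top] at hf ⊢
  refine eq_top_of_sup_jacobson_eq_top ?_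
  rw [sup_comm]
  rwa [LinearMap.range_comp, Submodule.map_mkQ_eq_top] at hf

theorem bijective_of_surjective_of_ker_le_jacobson [IsCoatomic (Submodule R M)]
    [Module.Projective R N] {f : M →ₗ[R] N} (hf : Function.Surjective f)
    (hker : LinearMap.ker f ≤ Module.jacobson R M) : Function.Bijective f := by
  obtain ⟨s, hs⟩ := Module.projective_lifting_property f LinearMap.id hf
  have hfs (y : N) : f (s y) = y := congr($hs y)
  have hrange : LinearMap.range s = ⊤ := by
    refine eq_top_of_sup_jacobson_eq_top (top_le_iff.mp fun x _ ↦ ?_)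
    rw [← add_sub_cancel (s (f x)) x]
    exact Submodule.add_mem_sup ⟨f x, rfl⟩ (hker (by simp [hfs]))
  have hinv : Function.RightInverse f s :=
    Function.LeftInverse.rightInverse_of_surjective hfs (LinearMap.range_eq_top.mp hrange)
  exact ⟨hinv.injective, hf⟩

theorem nonempty_linearEquiv_of_quotient_jacobson [Module.Finite R M] [Module.Projective R M]
    [Module.Finite R N] [Module.Projective R N]
    (e : (M ⧸ Module.jacobson R M) ≃ₗ[R] (N ⧸ Module.jacobson R N)) : Nonempty (M ≃ₗ[R] N) := by
  let g : M →ₗ[R] (N ⧸ Module.jacobson R N) := e.toLinearMap ∘ₗ (Module.jacobson R M).mkQ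
  obtain ⟨f, hf⟩ := Module.projective_lifting_property _ g (Submodule.mkQ_surjective _)
  have hsurj : Function.Surjective f := surjective_of_mkQ_jacobson_comp_surjective <| by
    rw [hf]
    exact e.surjective.comp (Submodule.mkQ_surjective _)
  have hker : LinearMap.ker f ≤ Module.jacobson R M := calc
    LinearMap.ker f ≤ LinearMap.ker g := hf ▸ LinearMap.ker_le_ker_comp _ _
    _ = Module.jacobson R M := by rw [LinearEquiv.ker_comp, Submodule.ker_mkQ]
  exact ⟨LinearEquiv.ofBijective f (bijective_of_surjective_of_ker_le_jacobson hsurj hker)⟩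

theorem module_finite_of_pi {ι : Type*} [Nonempty ι] [Module.Finite R (ι → M)] :
    Module.Finite R M :=
  ‹Nonempty ι›.elim fun i ↦ .of_surjective (.proj i : (ι → M) →ₗ[R] M) (LinearMap.proj_surjective i)

theorem module_projective_of_pi {ι : Type*} [Nonempty ι] [Module.Projective R (ι → M)] :
    Module.Projective R M := by
  classical
  obtain ⟨i⟩ := ‹Nonempty ι›
  exact .of_split (.single R (fun _ ↦ M) i) (.proj i) (LinearMap.proj_comp_single_same R _ i)

theorem nonempty_linearEquiv_of_pi {ι : Type*} [Finite ι] [Nonempty ι] [Module.Finite R M]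
    [Module.Projective R M] [IsSemisimpleModule R (M ⧸ Module.jacobson R M)]
    (e : (ι → M) ≃ₗ[R] (ι → N)) : Nonempty (M ≃ₗ[R] N) := by
  have := Module.Finite.equiv e
  have := Fintype.ofFinite ι
  have : Module.Projective R (ι → N) :=
    .of_equiv ((DFinsupp.linearEquivFunOnFintype (R := R) (M := fun _ : ι ↦ M)).trans e)
  have : Module.Finite R N := module_finite_of_pi (ι := ι)
  have : Module.Projective R N := module_projective_of_pi (ι := ι)
  obtain ⟨e'⟩ := nonempty_quotient_jacobson_linearEquiv_pi e
  have : IsSemisimpleModule R (ι → N ⧸ Module.jacobson R N) := .congr e'.symm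
  have : IsSemisimpleModule R (N ⧸ Module.jacobson R N) :=
    .of_injective (LinearMap.pi fun _ : ι ↦ LinearMap.id) Function.const_injective
  obtain ⟨e''⟩ := nonempty_linearEquiv_of_semisimple_pi isFiniteLength_of_finite e'
  exact nonempty_linearEquiv_of_quotient_jacobson e''

theorem isSemisimpleModule_quotient_jacobson [IsSemisimpleRing (R ⧸ Ring.jacobson R)] :
    IsSemisimpleModule R (R ⧸ Module.jacobson R R) := by
  let π := Ideal.Quotient.mk (Ring.jacobson R)
  have : RingHomSurjective π := ⟨Ideal.Quotient.mk_surjective⟩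
  let q : (R ⧸ Module.jacobson R R) →ₛₗ[π] (R ⧸ Ring.jacobson R) :=
    { AddMonoidHom.id _ with map_smul' := fun r x ↦ x.inductionOn' fun _ ↦ rfl }
  exact (q.isSemisimpleModule_iff_of_bijective Function.bijective_id).mpr ‹_›

end Radical

section Descent

theorem sum_basis_mul_algEquiv_traceDual {k K ι : Type*} [Field k] [Field K] [Algebra k K]
    [FiniteDimensional k K] [IsGalois k K] [Fintype ι] [DecidableEq ι] (b : Module.Basis ι k K)
    (σ : K ≃ₐ[k] K) [Decidable (σ = 1)] :
    ∑ i, b i * σ (b.traceDual i) = if σ = 1 then 1 else 0 := by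
  classical
  let P : Matrix ι (K ≃ₐ[k] K) K := .of fun i σ ↦ σ (b.traceDual i)
  let Q : Matrix (K ≃ₐ[k] K) ι K := .of fun σ i ↦ σ (b i)
  have hPQ : P * Q = 1 := by
    ext i j
    simp only [P, Q, Matrix.mul_apply, Matrix.of_apply, ← map_mul, ← trace_eq_sum_automorphisms,
      Module.Basis.trace_traceDual_mul, Matrix.one_apply, eq_comm (a := j)]
    split_ifs <;> simp
  have hcard : Fintype.card ι = Fintype.card (K ≃ₐ[k] K) := by
    rw [← Module.finrank_eq_card_basis b, ← IsGalois.card_aut_eq_finrank, Nat.card_eq_fintype_card]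
  have hQP : Q * P = 1 := (Matrix.mul_eq_one_comm_of_card_eq _ _ _ hcard).mp hPQ
  simpa [P, Q, Matrix.mul_apply, Matrix.one_apply, eq_comm] using congr($hQP 1 σ)

/-- The submodule of vectors fixed by a monoid `G` acting on `V` by `A`-linear maps. This is
`Representation.invariants` over a ring `A` that need not be commutative. -/
def linearInvariants {G A V : Type*} [Monoid G] [Semiring A] [AddCommMonoid V] [Module A V]
    (ρ : G →* Module.End A V) : Submodule A V :=
  ⨅ g, LinearMap.eqLocus (ρ g) LinearMap.id

theorem mem_linearInvariants {G A V : Type*} [Monoid G] [Semiring A] [AddCommMonoid V] [Module A V]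
    {ρ : G →* Module.End A V} {v : V} : v ∈ linearInvariants ρ ↔ ∀ g, ρ g v = v := by
  simp [linearInvariants]

theorem sum_apply_mem_linearInvariants {G A V : Type*} [Group G] [Fintype G] [Semiring A]
    [AddCommMonoid V] [Module A V] (ρ : G →* Module.End A V) (v : V) :
    ∑ g, ρ g v ∈ linearInvariants ρ := by
  refine mem_linearInvariants.mpr fun h ↦ ?_
  rw [map_sum, ← Equiv.sum_comp (Equiv.mulLeft h) fun g ↦ ρ g v]
  simp

variable {k K A V : Type*} [Field k] [Field K] [Algebra k K] [FiniteDimensional k K] [IsGalois k K]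
variable [Semiring A] [AddCommMonoid V] [Module A V] [Module K V]
variable {ρ : (K ≃ₐ[k] K) →* Module.End A V}

theorem sum_apply_smul_of_mem_linearInvariants
    (hρ : ∀ σ (y : K) v, ρ σ (y • v) = σ y • ρ σ v) (y : K) {v : V}
    (hv : v ∈ linearInvariants ρ) :
    ∑ σ, ρ σ (y • v) = algebraMap k K (Algebra.trace k K y) • v := by
  simp only [hρ, mem_linearInvariants.mp hv, ← Finset.sum_smul, trace_eq_sum_automorphisms]

theorem sum_basis_smul_sum_apply_traceDual_smul {ι : Type*} [Fintype ι] [DecidableEq ι]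
    (hρ : ∀ σ (y : K) v, ρ σ (y • v) = σ y • ρ σ v) (b : Module.Basis ι k K) (v : V) :
    ∑ i, b i • ∑ σ, ρ σ (b.traceDual i • v) = v := by
  classical
  simp only [hρ, Finset.smul_sum, smul_smul]
  rw [Finset.sum_comm]
  simp only [← Finset.sum_smul, sum_basis_mul_algEquiv_traceDual, ite_smul, one_smul, zero_smul,
    Finset.sum_ite_eq', Finset.mem_univ, if_true, map_one, Module.End.one_apply]

/-- Galois descent in coordinates: a semilinear action of `Gal(K/k)` on `V` commuting with `A`
identifies `V` with `[K : k]` copies of its invariants. The inverse is read off from the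
trace-dual basis. -/
noncomputable def descentEquiv [SMulCommClass A K V] {ι : Type*} [Fintype ι] [DecidableEq ι]
    (hρ : ∀ σ (y : K) v, ρ σ (y • v) = σ y • ρ σ v) (b : Module.Basis ι k K) :
    (ι → linearInvariants ρ) ≃ₗ[A] V where
  toFun n := ∑ i, b i • (n i : V)
  map_add' n n' := by simp [Finset.sum_add_distrib]
  map_smul' a n := by simp [Finset.smul_sum, smul_comm a]
  invFun v i := ⟨_, sum_apply_mem_linearInvariants ρ (b.traceDual i • v)⟩
  left_inv n := by
    ext i
    simp only [Finset.smul_sum, smul_smul, map_sum]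
    rw [Finset.sum_comm]
    simp [sum_apply_smul_of_mem_linearInvariants hρ, Module.Basis.trace_traceDual_mul, ite_smul]
  right_inv v := sum_basis_smul_sum_apply_traceDual_smul hρ b v

end Descent

section TwistedAction

variable {k K A : Type*} [Field k] [Field K] [Algebra k K] [Ring A] [Algebra k A]

attribute [local instance] Algebra.TensorProduct.rightAlgebra

theorem tensorGalAut_one_apply (x : A ⊗[k] K) : tensorGalAut k K A 1 x = x := by
  induction x with
  | zero => simp
  | tmul a y => simp [tensorGalAut]
  | add x y hx hy => rw [map_add, hx, hy]

theorem tensorGalAut_mul_apply (σ τ : K ≃ₐ[k] K) (x : A ⊗[k] K) :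
    tensorGalAut k K A (σ * τ) x = tensorGalAut k K A σ (tensorGalAut k K A τ x) := by
  induction x with
  | zero => simp
  | tmul a y => simp [tensorGalAut]
  | add x y hx hy => simp only [map_add, hx, hy]

theorem tensorGalAut_smul (σ : K ≃ₐ[k] K) (a : A) (x : A ⊗[k] K) :
    tensorGalAut k K A σ (a • x) = a • tensorGalAut k K A σ x := by
  induction x with
  | zero => simp
  | tmul b y => simp [tensorGalAut, TensorProduct.smul_tmul']
  | add x y hx hy => simp only [smul_add, map_add, hx, hy]

theorem tensorGalAut_smul_right (σ : K ≃ₐ[k] K) (y : K) (x : A ⊗[k] K) :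
    tensorGalAut k K A σ (y • x) = σ y • tensorGalAut k K A σ x := by
  simp [Algebra.smul_def, Algebra.TensorProduct.right_algebraMap_apply, tensorGalAut]

theorem tensorGalActUnits_one_apply (u : (A ⊗[k] K)ˣ) : tensorGalActUnits k K A 1 u = u :=
  Units.ext (tensorGalAut_one_apply (u : A ⊗[k] K))

theorem cocycle_map_one {c : (K ≃ₐ[k] K) → (A ⊗[k] K)ˣ}
    (hc : ∀ σ τ, c (σ * τ) = c σ * tensorGalActUnits k K A σ (c τ)) : c 1 = 1 := by
  simpa [tensorGalActUnits_one_apply] using hc 1 1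

/-- The Galois action on `A ⊗[k] K` twisted by a 1-cocycle `c`, namely `x ↦ σ(x) * c(σ)⁻¹`. It acts
through right multiplications, so that it stays `A`-linear. -/
noncomputable def twistedGalAction {c : (K ≃ₐ[k] K) → (A ⊗[k] K)ˣ}
    (hc : ∀ σ τ, c (σ * τ) = c σ * tensorGalActUnits k K A σ (c τ)) :
    (K ≃ₐ[k] K) →* Module.End A (A ⊗[k] K) where
  toFun σ :=
    { toFun := fun x ↦ tensorGalAut k K A σ x * ↑(c σ)⁻¹
      map_add' := fun x y ↦ by rw [map_add, add_mul]
      map_smul' := fun a x ↦ by rw [tensorGalAut_smul, smul_mul_assoc, RingHom.id_apply] }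
  map_one' := by
    ext x
    simp [cocycle_map_one hc, tensorGalAut_one_apply]
  map_mul' σ τ := by
    ext x
    simp [hc, tensorGalAut_mul_apply, mul_assoc, tensorGalActUnits, ← map_inv]

variable {c : (K ≃ₐ[k] K) → (A ⊗[k] K)ˣ}
variable (hc : ∀ σ τ, c (σ * τ) = c σ * tensorGalActUnits k K A σ (c τ))

theorem twistedGalAction_apply (σ : K ≃ₐ[k] K) (x : A ⊗[k] K) :
    twistedGalAction hc σ x = tensorGalAut k K A σ x * ↑(c σ)⁻¹ :=
  rfl

theorem twistedGalAction_smul (σ : K ≃ₐ[k] K) (y : K) (x : A ⊗[k] K) :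
    twistedGalAction hc σ (y • x) = σ y • twistedGalAction hc σ x := by
  rw [twistedGalAction_apply, tensorGalAut_smul_right, smul_mul_assoc, twistedGalAction_apply]

theorem mem_linearInvariants_twistedGalAction {x : A ⊗[k] K} :
    x ∈ linearInvariants (twistedGalAction hc) ↔ ∀ σ, tensorGalAut k K A σ x = x * c σ := by
  simp only [mem_linearInvariants, twistedGalAction_apply, Units.mul_inv_eq_iff_eq_mul]

theorem eq_mul_inv_of_mem_linearInvariants {u : (A ⊗[k] K)ˣ}
    (hu : (u : A ⊗[k] K) ∈ linearInvariants (twistedGalAction hc)) (σ : K ≃ₐ[k] K) :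
    c σ = u⁻¹ * (tensorGalActUnits k K A σ u⁻¹)⁻¹ := by
  have hσ : tensorGalActUnits k K A σ u = u * c σ :=
    Units.ext ((mem_linearInvariants_twistedGalAction hc).mp hu σ)
  rw [map_inv, inv_inv, hσ, inv_mul_cancel_left]

variable [FiniteDimensional k K] [IsGalois k K]

theorem isUnit_apply_one_of_linearEquiv_linearInvariants
    (φ : A ≃ₗ[A] linearInvariants (twistedGalAction hc)) : IsUnit (φ 1 : A ⊗[k] K) := by
  let b := Module.finBasis k K
  let coords := (Algebra.TensorProduct.basis A b).equivFun
  let e : (A ⊗[k] K) ≃ₗ[A] (A ⊗[k] K) := (coords.trans (LinearEquiv.piCongrRight fun _ ↦ φ)).trans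
    (descentEquiv (twistedGalAction_smul hc) b)
  have he (x : A ⊗[k] K) : e x = x * (φ 1 : A ⊗[k] K) := by
    have hφ (a : A) : (φ a : A ⊗[k] K) = a • (φ 1 : A ⊗[k] K) := by
      rw [← Submodule.coe_smul, ← map_smul, smul_eq_mul, mul_one]
    calc
      e x = ∑ i, b i • (φ (coords x i) : A ⊗[k] K) := rfl
      _ = ∑ i, (coords x i • Algebra.TensorProduct.basis A b i) * (φ 1 : A ⊗[k] K) :=
        Finset.sum_congr rfl fun i _ ↦ by
          rw [hφ, smul_comm, smul_mul_assoc, Algebra.TensorProduct.basis_apply, Algebra.smul_def,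
            Algebra.TensorProduct.right_algebraMap_apply]
      _ = x * (φ 1 : A ⊗[k] K) := by
        rw [← Finset.sum_mul, (Algebra.TensorProduct.basis A b).sum_equivFun]
  rw [IsUnit.isUnit_iff_mulRight_bijective, ← funext he]
  exact e.bijective

theorem nonempty_linearEquiv_linearInvariants_twistedGalAction
    [IsSemisimpleRing (A ⧸ Ring.jacobson A)] :
    Nonempty (A ≃ₗ[A] linearInvariants (twistedGalAction hc)) := by
  let b := Module.finBasis k K
  have : Nonempty (Fin (Module.finrank k K)) := ⟨⟨0, Module.finrank_pos⟩⟩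
  have := isSemisimpleModule_quotient_jacobson (R := A)
  exact nonempty_linearEquiv_of_pi ((Algebra.TensorProduct.basis A b).equivFun.symm.trans
    (descentEquiv (twistedGalAction_smul hc) b).symm)

end TwistedAction

theorem stmt_0_general (k : Type*) [Field k] (k' : Type*) [Field k'] [Algebra k k']
    [FiniteDimensional k k'] [IsGalois k k']
    (A : Type*) [Ring A] [Algebra k A] [IsSemisimpleRing (A ⧸ Ring.jacobson A)]
    (c : (k' ≃ₐ[k] k') → (A ⊗[k] k')ˣ)
    (hc : ∀ σ τ : k' ≃ₐ[k] k',
      c (σ * τ) = c σ * tensorGalActUnits k k' A σ (c τ)) :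
    ∃ b : (A ⊗[k] k')ˣ, ∀ σ : k' ≃ₐ[k] k',
      c σ = b * (tensorGalActUnits k k' A σ b)⁻¹ := by
  obtain ⟨φ⟩ := nonempty_linearEquiv_linearInvariants_twistedGalAction hc
  obtain ⟨u, hu⟩ := isUnit_apply_one_of_linearEquiv_linearInvariants hc φ
  have hmem : (u : A ⊗[k] k') ∈ linearInvariants (twistedGalAction hc) := hu ▸ (φ 1).2
  exact ⟨u⁻¹, eq_mul_inv_of_mem_linearInvariants hc hmem⟩

/-- Lemma 2.1 (Kneser): for a finite-dimensional algebra `A` over a field `k` and a finite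
Galois extension `k'/k`, every 1-cocycle of `Gal(k'/k)` valued in `(A ⊗[k] k')ˣ` is a
coboundary, i.e. `H¹(Gal(k'/k), (A ⊗[k] k')ˣ)` is trivial. -/
theorem stmt_0 (k : Type*) [Field k] (k' : Type*) [Field k'] [Algebra k k']
    [FiniteDimensional k k'] [IsGalois k k']
    (A : Type*) [Ring A] [Algebra k A] [FiniteDimensional k A]
    (c : (k' ≃ₐ[k] k') → (A ⊗[k] k')ˣ)
    (hc : ∀ σ τ : k' ≃ₐ[k] k',
      c (σ * τ) = c σ * tensorGalActUnits k k' A σ (c τ)) :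
    ∃ b : (A ⊗[k] k')ˣ, ∀ σ : k' ≃ₐ[k] k',
      c σ = b * (tensorGalActUnits k k' A σ b)⁻¹ := by
  have : IsArtinianRing A := isArtinian_of_tower k inferInstance
  exact stmt_0_general k k' A c hc
end

section
/- Let Γ be a finite group acting by group automorphisms on a group K̃, let K̃' be a Γ-stable subgroup of K̃, and set K = K̃^Γ (the Γ-fixed points) and K' = (K̃')^Γ. Let k ∈ K; then the subgroup k K̃' k⁻¹ ∩ K̃' is Γ-stable. If every 1-cocycle of Γ with values in k K̃' k⁻¹ ∩ K̃' is a coboundary, then the Γ-fixed points of the double coset K̃' k K̃' are exactly K' k K': (K̃' k K̃')^Γ = K' k K'. -/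
/-!
Let `H`, `L` be `Γ`-stable subgroups, `k` a `Γ`-fixed element and `S = H ∩ k L k⁻¹`. If `x = a k b`
in `H k L` is fixed by `Γ`, then `σ ↦ a⁻¹ σ(a)` is a 1-cocycle with values in `S`,
because `k⁻¹ (a⁻¹ σ(a)) k = b σ(b)⁻¹`. Trivialising it amounts to choosing a `Γ`-fixed
element `a d` in the coset `a S`, and then `x = (a d) k (k⁻¹ d⁻¹ k b)`, where the last factor is
fixed because all the others are.
-/

open DoubleCoset
open scoped Pointwise

theorem mem_conj_smul_iff {G : Type*} [Group G] {L : Subgroup G} {k x : G} :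
    x ∈ MulAut.conj k • L ↔ k⁻¹ * x * k ∈ L := by
  rw [Subgroup.mem_pointwise_smul_iff_inv_smul_mem, MulAut.smul_def, MulAut.conj_inv_apply]

section Descent

variable {Γ G : Type*} [Monoid Γ] [Group G] [MulDistribMulAction Γ G]

/-- A 1-cocycle of `Γ` with values in the possibly noncommutative group `G`. Mathlib's
`groupCohomology.IsMulCocycle₁` assumes `G` commutative and multiplies in the other order. -/
def IsOneCocycle (c : Γ → G) : Prop :=
  ∀ σ τ : Γ, c (σ * τ) = c σ * σ • c τ

variable (Γ) in
/-- Triviality of the pointed set `H¹(Γ, S)`: every 1-cocycle with values in `S` is the coboundary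
of an element of `S`. Cocycles are maps into the ambient group, so that `S` needs no action of
its own. -/
def HasTrivialH1 (S : Subgroup G) : Prop :=
  ∀ c : Γ → G, (∀ σ, c σ ∈ S) → IsOneCocycle c → ∃ b ∈ S, ∀ σ, c σ = b * (σ • b)⁻¹

theorem isOneCocycle_inv_mul_smul (a : G) : IsOneCocycle fun σ : Γ ↦ a⁻¹ * σ • a := by
  intro σ τ
  simp only [smul_mul', smul_inv', mul_smul]
  group

theorem smul_mul_eq_mul_iff (σ : Γ) (a d : G) :
    σ • (a * d) = a * d ↔ a⁻¹ * σ • a = d * (σ • d)⁻¹ := by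
  rw [smul_mul', eq_mul_inv_iff_mul_eq, mul_assoc, inv_mul_eq_iff_eq_mul]

theorem HasTrivialH1.exists_mul_mem_fixedPoints {S : Subgroup G} (hS : HasTrivialH1 Γ S) {a : G}
    (ha : ∀ σ : Γ, a⁻¹ * σ • a ∈ S) : ∃ d ∈ S, a * d ∈ FixedPoints.subgroup Γ G := by
  obtain ⟨d, hd, hcob⟩ := hS _ ha (isOneCocycle_inv_mul_smul a)
  exact ⟨d, hd, fun σ ↦ (smul_mul_eq_mul_iff σ a d).2 (hcob σ)⟩

variable {H L : Subgroup G} {k : G}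

theorem smul_mem_inf_conj_smul (hH : ∀ σ : Γ, ∀ x ∈ H, σ • x ∈ H)
    (hL : ∀ σ : Γ, ∀ x ∈ L, σ • x ∈ L) (hk : k ∈ FixedPoints.subgroup Γ G) (σ : Γ) {x : G}
    (hx : x ∈ H ⊓ MulAut.conj k • L) : σ • x ∈ H ⊓ MulAut.conj k • L := by
  rw [Subgroup.mem_inf, mem_conj_smul_iff] at hx ⊢
  refine ⟨hH σ x hx.1, ?_⟩
  simpa only [smul_mul', smul_inv', hk σ] using hL σ _ hx.2

theorem inv_mul_smul_mem_inf_conj_smul (hH : ∀ σ : Γ, ∀ x ∈ H, σ • x ∈ H)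
    (hL : ∀ σ : Γ, ∀ x ∈ L, σ • x ∈ L) (hk : k ∈ FixedPoints.subgroup Γ G) {a b : G} (ha : a ∈ H)
    (hb : b ∈ L) (hx : a * k * b ∈ FixedPoints.subgroup Γ G) (σ : Γ) :
    a⁻¹ * σ • a ∈ H ⊓ MulAut.conj k • L := by
  have conj_eq : k⁻¹ * (a⁻¹ * σ • a) * k = b * (σ • b)⁻¹ := by
    have hσ := (smul_mul_eq_mul_iff σ (a * k) b).1 (hx σ)
    rw [← hσ, smul_mul', hk σ]
    group
  rw [Subgroup.mem_inf, mem_conj_smul_iff, conj_eq]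
  exact ⟨mul_mem (inv_mem ha) (hH σ a ha), mul_mem hb (inv_mem (hL σ b hb))⟩

theorem doubleCoset_inter_fixedPoints (hH : ∀ σ : Γ, ∀ x ∈ H, σ • x ∈ H)
    (hL : ∀ σ : Γ, ∀ x ∈ L, σ • x ∈ L) (hk : k ∈ FixedPoints.subgroup Γ G)
    (hS : HasTrivialH1 Γ (H ⊓ MulAut.conj k • L)) :
    doubleCoset k H L ∩ FixedPoints.subgroup Γ G =
      doubleCoset k ↑(H ⊓ FixedPoints.subgroup Γ G) ↑(L ⊓ FixedPoints.subgroup Γ G) := by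
  ext x
  simp only [Set.mem_inter_iff, mem_doubleCoset, SetLike.mem_coe, Subgroup.mem_inf]
  constructor
  · rintro ⟨⟨a, ha, b, hb, rfl⟩, hx⟩
    obtain ⟨d, hd, had⟩ := hS.exists_mul_mem_fixedPoints
      (inv_mul_smul_mem_inf_conj_smul hH hL hk ha hb hx)
    rw [Subgroup.mem_inf, mem_conj_smul_iff] at hd
    have right_factor_eq : (k⁻¹ * d * k)⁻¹ * b = (a * d * k)⁻¹ * (a * k * b) := by group
    refine ⟨a * d, ⟨mul_mem ha hd.1, had⟩, (k⁻¹ * d * k)⁻¹ * b,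
      ⟨mul_mem (inv_mem hd.2) hb, ?_⟩, by group⟩
    rw [right_factor_eq]
    exact mul_mem (inv_mem (mul_mem had hk)) hx
  · rintro ⟨a, ⟨ha, hfa⟩, b, ⟨hb, hfb⟩, rfl⟩
    exact ⟨⟨a, ha, b, hb, rfl⟩, mul_mem (mul_mem hfa hk) hfb⟩

theorem stmt_1_general (hH : ∀ σ : Γ, ∀ x ∈ H, σ • x ∈ H)
    (hL : ∀ σ : Γ, ∀ x ∈ L, σ • x ∈ L) (hk : k ∈ FixedPoints.subgroup Γ G)
    (hS : HasTrivialH1 Γ (H ⊓ MulAut.conj k • L)) :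
    (∀ σ : Γ, ∀ x ∈ H ⊓ MulAut.conj k • L, σ • x ∈ H ⊓ MulAut.conj k • L) ∧
      doubleCoset k H L ∩ FixedPoints.subgroup Γ G =
        doubleCoset k ↑(H ⊓ FixedPoints.subgroup Γ G) ↑(L ⊓ FixedPoints.subgroup Γ G) :=
  ⟨fun σ _ ↦ smul_mem_inf_conj_smul hH hL hk σ, doubleCoset_inter_fixedPoints hH hL hk hS⟩

end Descent

/-- Lemma 2.2 (Galois descent for double cosets): let a finite group `Γ` act by group
automorphisms on a group `K̃`, let `K'` be a `Γ`-stable subgroup and `k` a `Γ`-fixed element.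
Then `k K̃' k⁻¹ ∩ K̃'` is `Γ`-stable (note `x ∈ k K̃' k⁻¹ ↔ k⁻¹ * x * k ∈ K̃'`), and if every
1-cocycle of `Γ` with values in `k K̃' k⁻¹ ∩ K̃'` is a coboundary, then
`(K̃' k K̃')^Γ = K' k K'` where `K' = (K̃')^Γ`. -/
theorem stmt_1 (Γ Kt : Type*) [Group Γ] [Finite Γ] [Group Kt]
    [MulDistribMulAction Γ Kt]
    (K' : Subgroup Kt) (hK' : ∀ (σ : Γ) (x : Kt), x ∈ K' → σ • x ∈ K')
    (k : Kt) (hk : ∀ σ : Γ, σ • k = k)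
    (hcoc : ∀ c : Γ → Kt,
        (∀ σ, c σ ∈ K' ∧ k⁻¹ * c σ * k ∈ K') →
        (∀ σ τ, c (σ * τ) = c σ * σ • c τ) →
        ∃ b : Kt, (b ∈ K' ∧ k⁻¹ * b * k ∈ K') ∧ ∀ σ, c σ = b * (σ • b)⁻¹) :
    (∀ (σ : Γ) (x : Kt), x ∈ K' ∧ k⁻¹ * x * k ∈ K' →
        σ • x ∈ K' ∧ k⁻¹ * (σ • x) * k ∈ K') ∧
    {x : Kt | (∃ a ∈ K', ∃ b ∈ K', x = a * k * b) ∧ ∀ σ : Γ, σ • x = x} =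
      {x : Kt | ∃ a ∈ K', ∃ b ∈ K',
        (∀ σ : Γ, σ • a = a) ∧ (∀ σ : Γ, σ • b = b) ∧ x = a * k * b} := by
  have hS : HasTrivialH1 Γ (K' ⊓ MulAut.conj k • K') := by
    simpa only [HasTrivialH1, IsOneCocycle, Subgroup.mem_inf, mem_conj_smul_iff] using hcoc
  simpa [mem_conj_smul_iff, Set.ext_iff, mem_doubleCoset, and_assoc, and_left_comm,
    ← exists_and_left] using stmt_1_general hK' hK' hk hS
end

section
/- Let k be a field of characteristic different from 2 and let α ∈ GL_n(k) be unipotent. Then α lies in the k-subalgebra of M_n(k) generated by α² (α is a polynomial in α²); in particular, any matrix x ∈ M_n(k) that commutes with α² also commutes with α. -/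
/-!
Let `a` be nilpotent and let `f` be a polynomial whose linear coefficient is a unit. Over
`S = R[f(a)]` the polynomial `f - f(a)` has the approximate root `0`, where its derivative is a
unit, so Newton's method finds an exact root in `S` close to `0`. Such a root is unique
even in the larger commutative ring `R[a]`, where `a` is one too; hence `a ∈ S`. For a unipotent
`a` apply this to `a - 1` and `f = (X + 1) ^ m`, whose linear coefficient is `m`.
-/

section

open Polynomial

theorem mem_range_algebraMap_of_isNilpotent_sub_of_aeval_eq_zero {A B : Type*} [CommRing A]
    [CommRing B] [Algebra A B] [FaithfulSMul A B] {P : A[X]} {a : A} {b : B}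
    (hab : IsNilpotent (algebraMap A B a - b)) (hb : aeval b P = 0)
    (hP : IsUnit (aeval a (derivative P))) : b ∈ (algebraMap A B).range := by
  have hPa : IsNilpotent (aeval a P) := by
    rw [← IsNilpotent.map_iff (FaithfulSMul.algebraMap_injective A B), ← aeval_algebraMap_apply]
    simpa only [hb, sub_zero] using isNilpotent_aeval_sub_of_isNilpotent_sub P hab
  obtain ⟨r, ⟨har, hr⟩, -⟩ := existsUnique_nilpotent_sub_and_aeval_eq_zero hPa hP
  have hPb : IsNilpotent (aeval (algebraMap A B a) P) := by
    rw [aeval_algebraMap_apply]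
    exact hPa.map _
  have hP' : IsUnit (aeval (algebraMap A B a) (derivative P)) := by
    rw [aeval_algebraMap_apply]
    exact hP.map _
  refine ⟨r, (existsUnique_nilpotent_sub_and_aeval_eq_zero hPb hP').unique ⟨?_, ?_⟩ ⟨hab, hb⟩⟩
  · rw [← map_sub]
    exact har.map _
  · rw [aeval_algebraMap_apply, hr, map_zero]

variable {R A : Type*} [CommRing R]

theorem mem_of_isNilpotent_of_aeval_mem_of_comm [CommRing A] [Algebra R A] (S : Subalgebra R A)
    {a : A} (ha : IsNilpotent a) {f : R[X]} (hf : IsUnit (f.coeff 1)) (hS : aeval a f ∈ S) :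
    a ∈ S := by
  let P : S[X] := f.map (algebraMap R S) - C ⟨aeval a f, hS⟩
  have hP : IsUnit (aeval (0 : S) (derivative P)) := by
    have hP_coeff : P.coeff 1 = algebraMap R S (f.coeff 1) := by simp [P]
    rw [← coeff_zero_eq_aeval_zero, coeff_derivative, hP_coeff]
    simpa using hf.map (algebraMap R S)
  have haP : aeval a P = 0 := by simp [P]
  obtain ⟨s, rfl⟩ := mem_range_algebraMap_of_isNilpotent_sub_of_aeval_eq_zero
    (by simpa using ha) haP hP
  exact s.2

variable [Ring A] [Algebra R A] {a : A}

open scoped IsMulCommutative in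
theorem mem_of_isNilpotent_of_aeval_mem (S : Subalgebra R A) (ha : IsNilpotent a) {f : R[X]}
    (hf : IsUnit (f.coeff 1)) (hS : aeval a f ∈ S) : a ∈ S := by
  let ι := (Algebra.adjoin R {a}).val
  let a' : Algebra.adjoin R {a} := ⟨a, Algebra.self_mem_adjoin_singleton R a⟩
  have ha' : IsNilpotent a' := (IsNilpotent.map_iff (f := ι) Subtype.val_injective).1 ha
  have hS' : aeval a' f ∈ S.comap ι := by
    rwa [Subalgebra.mem_comap, ← aeval_algHom_apply]
  exact mem_of_isNilpotent_of_aeval_mem_of_comm (S.comap ι) ha' hf hS'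

theorem mem_of_isNilpotent_sub_one_of_pow_mem (S : Subalgebra R A) (ha : IsNilpotent (a - 1))
    {m : ℕ} (hm : IsUnit (m : R)) (hS : a ^ m ∈ S) : a ∈ S := by
  have hf : IsUnit (((X + 1 : R[X]) ^ m).coeff 1) := by
    rwa [coeff_X_add_one_pow, Nat.choose_one_right]
  have hmem : a - 1 ∈ S := mem_of_isNilpotent_of_aeval_mem S ha hf (by simpa using hS)
  simpa using add_mem hmem (one_mem S)

end

theorem stmt_4_general {R A : Type*} [CommRing R] [Ring A] [Algebra R A] {a : A}
    (ha : IsNilpotent (a - 1)) {m : ℕ} (hm : IsUnit (m : R)) :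
    a ∈ Algebra.adjoin R {a ^ m} ∧ ∀ x : A, Commute x (a ^ m) → Commute x a :=
  have hmem := mem_of_isNilpotent_sub_one_of_pow_mem _ ha hm (Algebra.self_mem_adjoin_singleton R _)
  ⟨hmem, fun _ ↦ Algebra.commute_of_mem_adjoin_singleton_of_commute hmem⟩

/-- Over a field `k` of characteristic different from 2, a unipotent matrix `α` lies in the
`k`-subalgebra of `M_n(k)` generated by `α²`; in particular any matrix commuting with `α²`
commutes with `α`. -/
theorem stmt_4 (n : ℕ) (k : Type*) [Field k] (hchar : ringChar k ≠ 2)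
    (α : Matrix (Fin n) (Fin n) k) (hα : IsNilpotent (α - 1)) :
    α ∈ Algebra.adjoin k {α ^ 2} ∧
    ∀ x : Matrix (Fin n) (Fin n) k, Commute x (α ^ 2) → Commute x α :=
  stmt_4_general hα (Ring.two_ne_zero hchar).isUnit
end

section
/- With the notation of the setup, one has H · U_S · H = { g ∈ G : ρ(g) ∈ U_S }; moreover every double coset H g H contained in this set is stable under inversion, i.e. g⁻¹ ∈ H g H for every g ∈ G with ρ(g) ∈ U_S. -/
noncomputable section

/-- The block matrix `g(α,β) = [[α, β], [β̄, ᾱ]]`, where `x ↦ x̄` is given by `σ`. -/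
def gmat {E : Type*} [Field E] {n : ℕ} (σ : E → E) (α β : Matrix (Fin n) (Fin n) E) :
    Matrix (Fin n ⊕ Fin n) (Fin n ⊕ Fin n) E :=
  Matrix.fromBlocks α β (β.map σ) (α.map σ)

/-- The group `G` of invertible matrices of the form `g(α,β)`. -/
def GuoG (E : Type*) [Field E] (n : ℕ) (σ : E → E) :
    Set (Matrix (Fin n ⊕ Fin n) (Fin n ⊕ Fin n) E) :=
  {g | (∃ α β : Matrix (Fin n) (Fin n) E, g = gmat σ α β) ∧ IsUnit g}

/-- The subgroup `H` of elements `g(α,0)` of `G`. -/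
def GuoH (E : Type*) [Field E] (n : ℕ) (σ : E → E) :
    Set (Matrix (Fin n ⊕ Fin n) (Fin n ⊕ Fin n) E) :=
  {g | (∃ α : Matrix (Fin n) (Fin n) E, g = gmat σ α 0) ∧ IsUnit g}

/-- The element `ε = δ·diag(I_n, -I_n)`. -/
def Guoeps (E : Type*) [Field E] (n : ℕ) (δ : E) :
    Matrix (Fin n ⊕ Fin n) (Fin n ⊕ Fin n) E :=
  δ • Matrix.fromBlocks 1 0 0 (-1)

/-- The symmetric space `S = {s ∈ G | ε s ε⁻¹ = s⁻¹}`. -/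
def GuoS (E : Type*) [Field E] (n : ℕ) (σ : E → E) (δ : E) :
    Set (Matrix (Fin n ⊕ Fin n) (Fin n ⊕ Fin n) E) :=
  {s | s ∈ GuoG E n σ ∧ Guoeps E n δ * s * (Guoeps E n δ)⁻¹ = s⁻¹}

/-- The map `ρ : g ↦ g ε g⁻¹ ε⁻¹`. -/
def Guorho (E : Type*) [Field E] (n : ℕ) (δ : E)
    (g : Matrix (Fin n ⊕ Fin n) (Fin n ⊕ Fin n) E) :
    Matrix (Fin n ⊕ Fin n) (Fin n ⊕ Fin n) E :=
  g * Guoeps E n δ * g⁻¹ * (Guoeps E n δ)⁻¹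

/-- The set `U` of unipotent elements of `G`. -/
def GuoU (E : Type*) [Field E] (n : ℕ) (σ : E → E) :
    Set (Matrix (Fin n ⊕ Fin n) (Fin n ⊕ Fin n) E) :=
  {g | g ∈ GuoG E n σ ∧ IsNilpotent (g - 1)}

/-- The set `U_S = U ∩ S`. -/
def GuoUS (E : Type*) [Field E] (n : ℕ) (σ : E → E) (δ : E) :
    Set (Matrix (Fin n ⊕ Fin n) (Fin n ⊕ Fin n) E) :=
  GuoU E n σ ∩ GuoS E n σ δ

/-!
The units of the ring of all matrices `g(α,β)` form `G`, the centralizer of `ε` in `G` is `H`, and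
`ρ(g)` is the commutator of `g` and `ε`. Since `2` is invertible, a unipotent element has a unique
unipotent square root. For `s ∈ U_S` with root `u`, both `ε u ε⁻¹` and `u⁻¹` are unipotent roots of
`s⁻¹`, so they agree and `u ∈ U_S`. For `u ∈ U_S`, the equation `ρ(g) = u²` says exactly that
`u⁻¹ g` commutes with `ε`, i.e. that `g ∈ u H`; this gives the description of `H U_S H`. Stability
under inversion follows from `u⁻¹ = ε u ε⁻¹ ∈ H u H`.
-/

section Group

open scoped commutatorElement
variable {G : Type*} [Group G] {e g u : G} {K : Subgroup G}

theorem commutatorElement_eq_sq_iff (hu : SemiconjBy e u u⁻¹) :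
    ⁅g, e⁆ = u ^ 2 ↔ Commute e (u⁻¹ * g) := by
  have hu' : e * u⁻¹ = u * e := by simpa only [inv_inv] using hu.inv_right.eq
  calc ⁅g, e⁆ = u ^ 2 ↔ g * e = u * (u * e * g) := by
        rw [commutatorElement_def, mul_inv_eq_iff_eq_mul, mul_inv_eq_iff_eq_mul, sq]
        simp only [mul_assoc]
    _ ↔ u⁻¹ * g * e = e * (u⁻¹ * g) := by
        rw [← hu', ← inv_mul_eq_iff_eq_mul, mul_assoc, mul_assoc]
    _ ↔ Commute e (u⁻¹ * g) := eq_comm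

theorem inv_mem_doubleCoset_of_semiconjBy_inv (he : e ∈ K) (hu : SemiconjBy e u u⁻¹)
    (hg : g ∈ DoubleCoset.doubleCoset u K K) : g⁻¹ ∈ DoubleCoset.doubleCoset g K K := by
  rw [DoubleCoset.doubleCoset_eq_of_mem hg]
  obtain ⟨a, ha, b, hb, rfl⟩ := DoubleCoset.mem_doubleCoset.mp hg
  refine DoubleCoset.mem_doubleCoset.mpr
    ⟨b⁻¹ * e, mul_mem (inv_mem hb) he, e⁻¹ * a⁻¹, mul_mem (inv_mem he) (inv_mem ha), ?_⟩
  rw [mul_inv_rev, mul_inv_rev, eq_mul_inv_of_mul_eq hu.eq.symm]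
  simp only [mul_assoc]

end Group

section Ring

variable {A : Type*} [Ring A]

/-- An element of a ring is unipotent if it differs from `1` by a nilpotent element. -/
def IsUnipotent (x : A) : Prop :=
  IsNilpotent (x - 1)

namespace IsUnipotent

variable {x y : A}

theorem map_iff {B : Type*} [Ring B] {f : A →+* B} (hf : Function.Injective f) :
    IsUnipotent (f x) ↔ IsUnipotent x := by
  rw [IsUnipotent, ← map_one f, ← map_sub, IsNilpotent.map_iff hf, IsUnipotent]

theorem sq (hx : IsUnipotent x) : IsUnipotent (x ^ 2) := by
  have h : Commute (x - 1) (x + 1) :=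
    ((Commute.refl x).sub_left (.one_left x)).add_right (.one_right _)
  rw [IsUnipotent, ← one_pow 2, (Commute.one_right x).sq_sub_sq, h.symm.eq]
  exact h.isNilpotent_mul_right hx

theorem units_inv {u : Aˣ} (hu : IsUnipotent (u : A)) : IsUnipotent (↑u⁻¹ : A) := by
  have h : (↑u⁻¹ : A) - 1 = -(↑u⁻¹ * (u - 1)) := by simp [mul_sub]
  have hcomm : Commute (↑u⁻¹ : A) (u - 1) :=
    ((Commute.refl (u : A)).units_inv_left).sub_right (.one_right _)
  rw [IsUnipotent, h, isNilpotent_neg_iff]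
  exact hcomm.isNilpotent_mul_left hu

theorem units_conj (hx : IsUnipotent x) (u : Aˣ) : IsUnipotent (u * x * ↑u⁻¹) := by
  obtain ⟨k, hk⟩ := hx
  have h : u * x * ↑u⁻¹ - 1 = u * (x - 1) * ↑u⁻¹ := by simp [mul_sub, sub_mul]
  exact ⟨k, by rw [h, Units.conj_pow, hk, mul_zero, zero_mul]⟩

theorem isUnit_add (h2 : IsUnit (2 : A)) (hx : IsUnipotent x) (hy : IsUnipotent y)
    (hxy : Commute x y) : IsUnit (x + y) := by
  have hcomm : Commute (x - 1) (y - 1) :=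
    (hxy.sub_left (.one_left y)).sub_right (.one_right _)
  have h : x + y = 2 + ((x - 1) + (y - 1)) := by
    rw [← one_add_one_eq_two]; abel
  rw [h]
  exact (hcomm.isNilpotent_add hx hy).isUnit_add_left_of_commute h2 (Commute.ofNat_right _ 2)

theorem eq_of_sq_eq_sq (h2 : IsUnit (2 : A)) (hx : IsUnipotent x) (hy : IsUnipotent y)
    (hxy : Commute x y) (h : x ^ 2 = y ^ 2) : x = y := by
  have hmul : (x + y) * (x - y) = 0 := by rw [← hxy.sq_sub_sq, h, sub_self]
  exact sub_eq_zero.mp ((hx.isUnit_add h2 hy hxy).mul_right_eq_zero.mp hmul)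

theorem exists_sq_eq {B : Type*} [CommRing B] (h2 : IsUnit (2 : B)) {s : B}
    (hs : IsUnipotent s) : ∃ r : B, IsUnipotent r ∧ r ^ 2 = s := by
  open Polynomial in
  obtain ⟨r, ⟨hr, hrs⟩, -⟩ := existsUnique_nilpotent_sub_and_aeval_eq_zero
    (P := X ^ 2 - C s) (x := (1 : B))
    (by simpa using isNilpotent_neg_iff.mpr hs) (by simpa [one_add_one_eq_two] using h2)
  exact ⟨r, by simpa using! isNilpotent_neg_iff.mpr hr, by simpa [sub_eq_zero] using hrs⟩

theorem exists_mem_adjoin_sq_eq {R : Type*} [CommRing R] [Algebra R A] (h2 : IsUnit (2 : R))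
    (hx : IsUnipotent x) : ∃ r ∈ Algebra.adjoin R {x}, IsUnipotent r ∧ r ^ 2 = x := by
  let B := Algebra.adjoin R {x}
  have hmap {y : B} : IsUnipotent (y : A) ↔ IsUnipotent y :=
    map_iff (f := (B.val : B →+* A)) Subtype.val_injective
  have h2B : IsUnit (2 : B) := by simpa only [map_ofNat] using h2.map (algebraMap R B)
  obtain ⟨r, hr, hrx⟩ := exists_sq_eq h2B
    (s := ⟨x, Algebra.self_mem_adjoin_singleton R x⟩) (hmap.mp hx)
  exact ⟨r, r.2, hmap.mpr hr, congrArg Subtype.val hrx⟩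

theorem existsUnique_sq_eq (h2 : IsUnit (2 : A)) (hx : IsUnipotent x) :
    ∃! r : A, IsUnipotent r ∧ r ^ 2 = x := by
  -- Over the center `2` is an invertible scalar, so a root exists in the subalgebra spanned by the
  -- powers of `x`, whose elements commute with every other root of `x`.
  have h2_center : IsUnit (2 : Subring.center A) := by
    obtain ⟨v, hv⟩ := h2
    have hv_inv : (↑v⁻¹ : A) ∈ Subring.center A :=
      Set.units_inv_mem_center (hv ▸ ofNat_mem (Subring.center A) 2)
    refine .of_mul_eq_one ⟨_, hv_inv⟩ (Subtype.ext ?_)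
    change (2 : A) * ↑v⁻¹ = 1
    rw [← hv, v.mul_inv]
  obtain ⟨r, hr_mem, hr, hrx⟩ := hx.exists_mem_adjoin_sq_eq h2_center
  refine ⟨r, ⟨hr, hrx⟩, fun y ⟨hy, hyx⟩ ↦ ?_⟩
  have hyr : Commute y r :=
    Algebra.commute_of_mem_adjoin_singleton_of_commute hr_mem (hyx ▸ Commute.self_pow y 2)
  exact hy.eq_of_sq_eq_sq h2 hr hyr (hyx.trans hrx.symm)

end IsUnipotent

/-- The set `U_S`, relative to a unit `ε` of an arbitrary ring: the unipotent units `u` with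
`ε u ε⁻¹ = u⁻¹`. -/
def unipotentsInvertedBy (ε : Aˣ) : Set Aˣ :=
  {u | IsUnipotent (u : A) ∧ SemiconjBy ε u u⁻¹}

open scoped commutatorElement

variable {ε g h u : Aˣ}

theorem sq_mem_unipotentsInvertedBy (hu : u ∈ unipotentsInvertedBy ε) :
    u ^ 2 ∈ unipotentsInvertedBy ε :=
  ⟨by simpa only [Units.val_pow_eq_pow_val] using hu.1.sq,
    by simpa only [inv_pow] using hu.2.pow_right 2⟩

theorem conj_mem_unipotentsInvertedBy (hu : u ∈ unipotentsInvertedBy ε) (hh : Commute ε h) :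
    h * u * h⁻¹ ∈ unipotentsInvertedBy ε := by
  refine ⟨by simpa only [Units.val_mul] using hu.1.units_conj h, ?_⟩
  rw [conj_inv]
  exact (SemiconjBy.mul_right hh hu.2).mul_right hh.inv_right

theorem exists_sq_eq_of_mem_unipotentsInvertedBy (h2 : IsUnit (2 : A))
    (hu : u ∈ unipotentsInvertedBy ε) : ∃ r ∈ unipotentsInvertedBy ε, r ^ 2 = u := by
  obtain ⟨r, ⟨hr, hru⟩, -⟩ := hu.1.existsUnique_sq_eq h2
  obtain ⟨r, rfl⟩ : IsUnit r := (isUnit_pow_iff two_ne_zero).mp (hru ▸ u.isUnit)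
  have hru : r ^ 2 = u := Units.ext hru
  have hconj : (ε * r * ε⁻¹) ^ 2 = u⁻¹ := by
    rw [conj_pow, hru, hu.2.eq, mul_inv_cancel_right]
  have hinv : r⁻¹ ^ 2 = u⁻¹ := by rw [inv_pow, hru]
  have hr_conj : ε * r * ε⁻¹ = r⁻¹ := Units.ext <|
    (hu.1.units_inv.existsUnique_sq_eq h2).unique
      ⟨by simpa only [Units.val_mul] using hr.units_conj ε, congrArg Units.val hconj⟩
      ⟨hr.units_inv, congrArg Units.val hinv⟩
  exact ⟨r, ⟨hr, mul_inv_eq_iff_eq_mul.mp hr_conj⟩, hru⟩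

open Subgroup DoubleCoset

theorem commutatorElement_mem_unipotentsInvertedBy_iff (h2 : IsUnit (2 : A)) :
    ⁅g, ε⁆ ∈ unipotentsInvertedBy ε ↔ ∃ u ∈ unipotentsInvertedBy ε,
      g ∈ doubleCoset u (centralizer {ε}) (centralizer {ε}) := by
  simp only [mem_doubleCoset, SetLike.mem_coe, mem_centralizer_singleton_iff]
  constructor
  · intro hg
    obtain ⟨u, hu, hug⟩ := exists_sq_eq_of_mem_unipotentsInvertedBy h2 hg
    have hcomm : Commute ε (u⁻¹ * g) := (commutatorElement_eq_sq_iff hu.2).mp hug.symm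
    exact ⟨u, hu, 1, by simp, u⁻¹ * g, hcomm.symm.eq, by group⟩
  · rintro ⟨u, hu, a, ha, b, hb, rfl⟩
    have hv := conj_mem_unipotentsInvertedBy hu (Commute.symm ha)
    have hcomm : Commute ε ((a * u * a⁻¹)⁻¹ * (a * u * b)) := by
      simpa [mul_assoc] using Commute.symm (Commute.mul_left ha hb)
    rw [(commutatorElement_eq_sq_iff hv.2).mpr hcomm]
    exact sq_mem_unipotentsInvertedBy hv

theorem inv_mem_doubleCoset_of_commutatorElement_mem (h2 : IsUnit (2 : A))
    (hg : ⁅g, ε⁆ ∈ unipotentsInvertedBy ε) :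
    g⁻¹ ∈ doubleCoset g (centralizer {ε}) (centralizer {ε}) := by
  obtain ⟨u, hu, hgu⟩ := (commutatorElement_mem_unipotentsInvertedBy_iff h2).mp hg
  exact inv_mem_doubleCoset_of_semiconjBy_inv (mem_centralizer_singleton_iff.mpr rfl) hu.2 hgu

end Ring

section BlockConj

variable {m E : Type*} [Fintype m] [DecidableEq m] [CommRing E]

/-- The ring endomorphism of `2 × 2` block matrices which applies `σ` entrywise and conjugates by
the swap of the two blocks. When `σ` is an involution, its fixed points are the `g(α,β)`. -/
def blockConj (σ : E →+* E) : Matrix (m ⊕ m) (m ⊕ m) E →+* Matrix (m ⊕ m) (m ⊕ m) E :=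
  (Matrix.reindexRingEquiv E (Equiv.sumComm m m) : _ →+* _).comp σ.mapMatrix

theorem blockConj_fromBlocks (σ : E →+* E) (a b c d : Matrix m m E) :
    blockConj σ (Matrix.fromBlocks a b c d) =
      Matrix.fromBlocks (d.map σ) (c.map σ) (b.map σ) (a.map σ) := by
  ext (i | i) (j | j) <;> simp [blockConj]

/-- The ring of all matrices `g(α,β)`, invertible or not, for an involution `σ`. Its unit group
is `G`. -/
def twistedBlockRing (m : Type*) [Fintype m] [DecidableEq m] (σ : E →+* E) :
    Subring (Matrix (m ⊕ m) (m ⊕ m) E) :=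
  (blockConj σ).eqLocus (RingHom.id _)

variable {σ : E →+* E}

theorem isUnit_coe_twistedBlockRing_iff {x : twistedBlockRing m σ} :
    IsUnit (x : Matrix (m ⊕ m) (m ⊕ m) E) ↔ IsUnit x :=
  ((blockConj (m := m) σ).isUnit_eqLocus_mk_iff (RingHom.id _) x.2).symm

theorem isUnit_two_twistedBlockRing (h2 : IsUnit (2 : E)) : IsUnit (2 : twistedBlockRing m σ) := by
  rw [← isUnit_coe_twistedBlockRing_iff]
  simpa only [map_ofNat] using! h2.map (algebraMap E (Matrix (m ⊕ m) (m ⊕ m) E))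

/-- The embedding of `G`, the unit group of `twistedBlockRing`, into the matrices. -/
def unitsToMatrix (m : Type*) [Fintype m] [DecidableEq m] (σ : E →+* E) :
    (twistedBlockRing m σ)ˣ →* Matrix (m ⊕ m) (m ⊕ m) E :=
  (twistedBlockRing m σ).subtype.toMonoidHom.comp (Units.coeHom _)

theorem unitsToMatrix_injective : Function.Injective (unitsToMatrix m σ) :=
  Subtype.val_injective.comp Units.val_injective

theorem unitsToMatrix_inv (x : (twistedBlockRing m σ)ˣ) :
    unitsToMatrix m σ x⁻¹ = (unitsToMatrix m σ x)⁻¹ :=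
  (Matrix.inv_eq_right_inv (by rw [← map_mul, mul_inv_cancel, map_one])).symm

theorem isUnipotent_unitsToMatrix_iff {x : (twistedBlockRing m σ)ˣ} :
    IsUnipotent (unitsToMatrix m σ x) ↔ IsUnipotent (x : twistedBlockRing m σ) :=
  IsUnipotent.map_iff (f := (twistedBlockRing m σ).subtype) Subtype.val_injective

end BlockConj

theorem map_eq_neg_of_adjoin_eq_top {R B : Type*} [CommRing R] [CommRing B] [NoZeroDivisors B]
    [Algebra R B] {σ : B →ₐ[R] B} (hσ : σ ≠ AlgHom.id R B) {δ : B}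
    (hδ_sq : δ ^ 2 ∈ Set.range (algebraMap R B)) (hδ : Algebra.adjoin R {δ} = ⊤) : σ δ = -δ := by
  obtain ⟨c, hc⟩ := hδ_sq
  have h_sq : σ δ ^ 2 = δ ^ 2 := by rw [← map_pow, ← hc, σ.commutes]
  refine (sq_eq_sq_iff_eq_or_eq_neg.mp h_sq).resolve_left fun hfix ↦ hσ ?_
  exact AlgHom.ext_of_adjoin_eq_top hδ (Set.eqOn_singleton.mpr hfix)

section GuoSets

open Matrix Subgroup
open scoped commutatorElement

variable {E : Type*} [Field E] {n : ℕ} {σ : E →+* E} {δ : E}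

theorem mem_twistedBlockRing_iff (hσ : Function.Involutive σ)
    {g : Matrix (Fin n ⊕ Fin n) (Fin n ⊕ Fin n) E} :
    g ∈ twistedBlockRing (Fin n) σ ↔ ∃ α β : Matrix (Fin n) (Fin n) E, g = gmat σ α β := by
  change blockConj σ g = g ↔ _
  constructor
  · intro hg
    rw [← fromBlocks_toBlocks g, blockConj_fromBlocks, fromBlocks_inj] at hg
    refine ⟨g.toBlocks₁₁, g.toBlocks₁₂, ?_⟩
    rw [gmat, hg.2.2.1, hg.2.2.2, fromBlocks_toBlocks]
  · rintro ⟨α, β, rfl⟩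
    simp [gmat, blockConj_fromBlocks, hσ.comp_self]

theorem GuoG_eq_range (hσ : Function.Involutive σ) :
    GuoG E n σ = Set.range (unitsToMatrix (Fin n) σ) := by
  ext g
  constructor
  · rintro ⟨hg, hg_unit⟩
    lift g to twistedBlockRing (Fin n) σ using (mem_twistedBlockRing_iff hσ).mpr hg
    obtain ⟨x, rfl⟩ := isUnit_coe_twistedBlockRing_iff.mp hg_unit
    exact ⟨x, rfl⟩
  · rintro ⟨x, rfl⟩
    exact ⟨(mem_twistedBlockRing_iff hσ).mp x.1.2, isUnit_coe_twistedBlockRing_iff.mpr x.isUnit⟩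

theorem Guoeps_mem_GuoG (hδ : δ ≠ 0) (hσδ : σ δ = -δ) : Guoeps E n δ ∈ GuoG E n σ := by
  refine ⟨⟨δ • 1, 0, ?_⟩, ?_⟩
  · ext (i | i) (j | j) <;> by_cases hij : i = j <;> simp [Guoeps, gmat, hσδ, hij]
  · refine IsUnit.of_mul_eq_one (δ⁻¹ • fromBlocks 1 0 0 (-1)) ?_
    simp [Guoeps, fromBlocks_multiply, smul_smul, hδ]

theorem commute_Guoeps_gmat_iff (h2 : (2 : E) ≠ 0) (hδ : δ ≠ 0) {α β : Matrix (Fin n) (Fin n) E} :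
    Commute (Guoeps E n δ) (gmat σ α β) ↔ β = 0 := by
  have hβ : β = -β ↔ β = 0 := by
    rw [eq_neg_iff_add_eq_zero, ← two_smul E, smul_eq_zero_iff_right h2]
  rw [Guoeps, Commute.smul_left_iff₀ hδ, Commute, SemiconjBy, gmat, fromBlocks_multiply,
    fromBlocks_multiply, fromBlocks_inj]
  simp only [one_mul, zero_mul, mul_zero, mul_one, neg_mul, mul_neg, add_zero, zero_add, hβ]
  simp +contextual [Matrix.map_zero]

theorem mem_GuoH_iff (h2 : (2 : E) ≠ 0) (hδ : δ ≠ 0)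
    {g : Matrix (Fin n ⊕ Fin n) (Fin n ⊕ Fin n) E} :
    g ∈ GuoH E n σ ↔ g ∈ GuoG E n σ ∧ Commute (Guoeps E n δ) g := by
  constructor
  · rintro ⟨⟨α, rfl⟩, hunit⟩
    exact ⟨⟨⟨α, 0, rfl⟩, hunit⟩, (commute_Guoeps_gmat_iff h2 hδ).mpr rfl⟩
  · rintro ⟨⟨⟨α, β, rfl⟩, hunit⟩, hcomm⟩
    obtain rfl := (commute_Guoeps_gmat_iff h2 hδ).mp hcomm
    exact ⟨⟨α, rfl⟩, hunit⟩

variable {ε x : (twistedBlockRing (Fin n) σ)ˣ}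

theorem Guorho_unitsToMatrix (hε : unitsToMatrix (Fin n) σ ε = Guoeps E n δ) :
    Guorho E n δ (unitsToMatrix (Fin n) σ x) = unitsToMatrix (Fin n) σ ⁅x, ε⁆ := by
  simp only [Guorho, ← hε, commutatorElement_def, map_mul, unitsToMatrix_inv]

theorem GuoH_eq_image (hσ : Function.Involutive σ) (h2 : (2 : E) ≠ 0) (hδ : δ ≠ 0)
    (hε : unitsToMatrix (Fin n) σ ε = Guoeps E n δ) :
    GuoH E n σ = unitsToMatrix (Fin n) σ '' centralizer {ε} := by
  have hmem (x) : unitsToMatrix (Fin n) σ x ∈ GuoH E n σ ↔ x ∈ centralizer {ε} := by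
    have hx : unitsToMatrix (Fin n) σ x ∈ GuoG E n σ := GuoG_eq_range hσ ▸ Set.mem_range_self x
    rw [mem_GuoH_iff h2 hδ, and_iff_right hx, mem_centralizer_singleton_iff, ← hε, Commute,
      SemiconjBy, ← map_mul, ← map_mul, unitsToMatrix_injective.eq_iff, eq_comm]
  have hsub : GuoH E n σ ⊆ Set.range (unitsToMatrix (Fin n) σ) :=
    fun _ hg ↦ GuoG_eq_range hσ ▸ ((mem_GuoH_iff h2 hδ).mp hg).1
  exact (Set.image_preimage_eq_of_subset hsub).symm.trans (congrArg _ (Set.ext hmem))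

theorem GuoUS_eq_image (hσ : Function.Involutive σ)
    (hε : unitsToMatrix (Fin n) σ ε = Guoeps E n δ) :
    GuoUS E n σ δ = unitsToMatrix (Fin n) σ '' unipotentsInvertedBy ε := by
  have hmem (x) : unitsToMatrix (Fin n) σ x ∈ GuoUS E n σ δ ↔ x ∈ unipotentsInvertedBy ε := by
    have hx : unitsToMatrix (Fin n) σ x ∈ GuoG E n σ := GuoG_eq_range hσ ▸ Set.mem_range_self x
    calc
      _ ↔ IsUnipotent (unitsToMatrix (Fin n) σ x) ∧ unitsToMatrix (Fin n) σ (ε * x * ε⁻¹) =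
          unitsToMatrix (Fin n) σ x⁻¹ := by
        simp only [map_mul, unitsToMatrix_inv, hε]
        exact and_congr (and_iff_right hx) (and_iff_right hx)
      _ ↔ _ := by
        rw [isUnipotent_unitsToMatrix_iff, unitsToMatrix_injective.eq_iff, mul_inv_eq_iff_eq_mul]
        rfl
  have hsub : GuoUS E n σ δ ⊆ Set.range (unitsToMatrix (Fin n) σ) :=
    fun _ hg ↦ GuoG_eq_range hσ ▸ hg.1.1
  exact (Set.image_preimage_eq_of_subset hsub).symm.trans (congrArg _ (Set.ext hmem))

theorem exists_unitsToMatrix_eq_Guoeps (hσ : Function.Involutive σ) (hδ : δ ≠ 0)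
    (hσδ : σ δ = -δ) : ∃ ε, unitsToMatrix (Fin n) σ ε = Guoeps E n δ :=
  (GuoG_eq_range hσ).subset (Guoeps_mem_GuoG hδ hσδ)

end GuoSets

open Subgroup DoubleCoset
open scoped commutatorElement

/-- Guo's Lemma 3.2 (2), in characteristic different from 2: one has
`H U_S H = {g ∈ G : ρ(g) ∈ U_S}`, and every double coset `H g H` contained in this set is
stable under inversion, i.e. `g⁻¹ ∈ H g H` whenever `ρ(g) ∈ U_S`. -/
theorem stmt_7 (n : ℕ) (F E : Type*) [Field F] [Field E] [Algebra F E]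
    (hchar : ringChar F ≠ 2) (hdim : Module.finrank F E = 2)
    (σ : E ≃ₐ[F] E) (hσinv : ∀ x : E, σ (σ x) = x) (hσne : σ ≠ AlgEquiv.refl)
    (δ : E) (hδ0 : δ ≠ 0) (hδ2 : ∃ c : F, algebraMap F E c = δ ^ 2)
    (hδgen : Algebra.adjoin F {δ} = ⊤) :
    {x : Matrix (Fin n ⊕ Fin n) (Fin n ⊕ Fin n) E |
        ∃ h₁ ∈ GuoH E n (⇑σ), ∃ u ∈ GuoUS E n (⇑σ) δ, ∃ h₂ ∈ GuoH E n (⇑σ),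
          x = h₁ * u * h₂} =
      {g : Matrix (Fin n ⊕ Fin n) (Fin n ⊕ Fin n) E |
        g ∈ GuoG E n (⇑σ) ∧ Guorho E n δ g ∈ GuoUS E n (⇑σ) δ} ∧
    ∀ g ∈ GuoG E n (⇑σ), Guorho E n δ g ∈ GuoUS E n (⇑σ) δ →
      ∃ h₁ ∈ GuoH E n (⇑σ), ∃ h₂ ∈ GuoH E n (⇑σ), g⁻¹ = h₁ * g * h₂ := by
  have h2E : IsUnit (2 : E) := by
    simpa only [map_ofNat] using (Ring.two_ne_zero hchar).isUnit.map (algebraMap F E)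
  have hσδ : σ δ = -δ := map_eq_neg_of_adjoin_eq_top (σ := (σ : E →ₐ[F] E))
    (fun h ↦ hσne (AlgEquiv.coe_toAlgHom_injective h)) hδ2 hδgen
  have hinv : Function.Involutive (σ : E →+* E) := hσinv
  let ι := unitsToMatrix (Fin n) (σ : E →+* E)
  have h2 : IsUnit (2 : twistedBlockRing (Fin n) (σ : E →+* E)) := isUnit_two_twistedBlockRing h2E
  obtain ⟨ε, hε⟩ : ∃ ε, ι ε = Guoeps E n δ := exists_unitsToMatrix_eq_Guoeps hinv hδ0 hσδ
  have hG : GuoG E n σ = Set.range ι := GuoG_eq_range hinv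
  have hH : GuoH E n σ = ι '' centralizer {ε} := GuoH_eq_image hinv h2E.ne_zero hδ0 hε
  have hUS : GuoUS E n σ δ = ι '' unipotentsInvertedBy ε := GuoUS_eq_image hinv hε
  have hρ (x) : Guorho E n δ (ι x) ∈ ι '' unipotentsInvertedBy ε ↔
      ⁅x, ε⁆ ∈ unipotentsInvertedBy ε := by
    rw [Guorho_unitsToMatrix hε, unitsToMatrix_injective.mem_set_image]
  rw [hG, hH, hUS]
  refine ⟨Set.ext fun g ↦ ⟨?_, ?_⟩, ?_⟩
  · rintro ⟨_, ⟨a, ha, rfl⟩, _, ⟨u, hu, rfl⟩, _, ⟨b, hb, rfl⟩, rfl⟩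
    rw [← map_mul, ← map_mul]
    exact ⟨⟨_, rfl⟩, (hρ _).mpr <| (commutatorElement_mem_unipotentsInvertedBy_iff h2).mpr
      ⟨u, hu, mem_doubleCoset.mpr ⟨a, ha, b, hb, rfl⟩⟩⟩
  · rintro ⟨⟨x, rfl⟩, hx⟩
    obtain ⟨u, hu, hxu⟩ := (commutatorElement_mem_unipotentsInvertedBy_iff h2).mp ((hρ x).mp hx)
    obtain ⟨a, ha, b, hb, rfl⟩ := mem_doubleCoset.mp hxu
    exact ⟨_, ⟨a, ha, rfl⟩, _, ⟨u, hu, rfl⟩, _, ⟨b, hb, rfl⟩, by rw [map_mul, map_mul]⟩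
  · rintro _ ⟨x, rfl⟩ hx
    obtain ⟨a, ha, b, hb, hab⟩ :=
      mem_doubleCoset.mp (inv_mem_doubleCoset_of_commutatorElement_mem h2 ((hρ x).mp hx))
    exact ⟨_, ⟨a, ha, rfl⟩, _, ⟨b, hb, rfl⟩, by rw [← unitsToMatrix_inv, hab, map_mul, map_mul]⟩
end
end

section
/- With the notation of the setup, if g(α,β) ∈ U_S, then α ∈ GL_n(E) is unipotent and β·β̄ ∈ M_n(E) is nilpotent. -/
noncomputable section

/-!
Conjugation by `ε` only changes the signs of the off-diagonal blocks, so `s = g(α, β) ∈ S` means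
that `g(α, -β)` is the inverse of `s`. For unipotent `s`, the element `s + s⁻¹ - 2 = s⁻¹ (s - 1)²`
is nilpotent, and it is the block diagonal matrix with blocks `2 (α - 1)` and `2 (ᾱ - 1)`. Hence
`α` is unipotent, and then `β β̄ = α² - 1 = (α - 1) (α + 1)` is nilpotent.
-/

section Nilpotent

theorem isNilpotent_of_isNilpotent_smul {M R : Type*} [Monoid M] [Semiring R]
    [DistribMulAction M R] [IsScalarTower M R R] [SMulCommClass M R R] {c : M} {x : R}
    (hc : IsSMulRegular R c) (hx : IsNilpotent (c • x)) : IsNilpotent x := by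
  obtain ⟨k, hk⟩ := hx
  exact ⟨k, (hc.pow k).right_eq_zero_of_smul (by rw [← smul_pow, hk])⟩

variable {R : Type*} [Ring R]

theorem isNilpotent_add_sub_two_of_mul_eq_one {s t : R} (hs : IsNilpotent (s - 1))
    (hst : s * t = 1) : IsNilpotent (s + t - 2) := by
  obtain ⟨u, rfl⟩ : IsUnit s := by simpa only [sub_add_cancel] using hs.isUnit_add_one
  obtain rfl : t = ↑u⁻¹ := (Units.inv_eq_of_mul_eq_one_right hst).symm
  have sum_eq : (u : R) + ↑u⁻¹ - 2 = ↑u⁻¹ * ((u : R) - 1) ^ 2 :=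
    calc
      (u : R) + ↑u⁻¹ - 2 = (↑u⁻¹ * u) * u + ↑u⁻¹ - 2 * (↑u⁻¹ * u) := by simp
      _ = ↑u⁻¹ * ((u : R) - 1) ^ 2 := by noncomm_ring
  have inv_comm : Commute (↑u⁻¹ : R) ((u : R) - 1) :=
    (Commute.refl (u : R)).units_inv_left.sub_right (Commute.one_right _)
  rw [sum_eq]
  exact (inv_comm.pow_right 2).isNilpotent_mul_left (hs.pow_of_pos two_ne_zero)

theorem isNilpotent_mul_self_sub_one {x : R} (hx : IsNilpotent (x - 1)) :
    IsNilpotent (x * x - 1) := by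
  rw [mul_self_sub_one]
  have add_comm_sub : Commute (x + 1) (x - 1) :=
    ((Commute.refl x).add_left (Commute.one_left x)).sub_right (Commute.one_right _)
  exact add_comm_sub.isNilpotent_mul_left hx

end Nilpotent

section Blocks

open Matrix

variable {R m n : Type*} [DecidableEq m] [DecidableEq n]

theorem isNilpotent_of_isNilpotent_fromBlocks_diagonal [Semiring R] [Fintype m] [Fintype n]
    {A : Matrix m m R} {D : Matrix n n R} (h : IsNilpotent (fromBlocks A 0 0 D)) :
    IsNilpotent A := by
  obtain ⟨k, hk⟩ := h
  rw [fromBlocks_diagonal_pow, ← fromBlocks_zero, fromBlocks_inj] at hk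
  exact ⟨k, hk.1⟩

variable [Ring R] {A : Matrix m m R} {B : Matrix m n R} {C : Matrix n m R} {D : Matrix n n R}

theorem fromBlocks_add_fromBlocks_neg_sub_two :
    fromBlocks A B C D + fromBlocks A (-B) (-C) D - 2 =
      fromBlocks (2 • (A - 1)) 0 0 (2 • (D - 1)) := by
  rw [← one_add_one_eq_two, ← fromBlocks_one, sub_eq_add_neg]
  simp only [fromBlocks_neg, fromBlocks_add, add_neg_cancel, add_zero, neg_zero]
  congr 1 <;> abel

variable [Fintype m] [Fintype n]

theorem isNilpotent_sub_one_of_fromBlocks_mul_eq_one (h2 : IsSMulRegular R (2 : ℕ))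
    (hnil : IsNilpotent (fromBlocks A B C D - 1))
    (hinv : fromBlocks A B C D * fromBlocks A (-B) (-C) D = 1) :
    IsNilpotent (A - 1) := by
  have sum_nil := isNilpotent_add_sub_two_of_mul_eq_one hnil hinv
  rw [fromBlocks_add_fromBlocks_neg_sub_two] at sum_nil
  exact isNilpotent_of_isNilpotent_smul h2.matrix
    (isNilpotent_of_isNilpotent_fromBlocks_diagonal sum_nil)

theorem mul_eq_mul_self_sub_one_of_fromBlocks_mul_eq_one
    (hinv : fromBlocks A B C D * fromBlocks A (-B) (-C) D = 1) :
    B * C = A * A - 1 := by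
  rw [fromBlocks_multiply, ← fromBlocks_one, fromBlocks_inj] at hinv
  rw [← hinv.1, Matrix.mul_neg]
  abel

end Blocks

section SymmetricSpace

open Matrix

variable {E : Type*} [Field E] {n : ℕ} {δ : E}

theorem Guoeps_conj_fromBlocks (hδ : δ ≠ 0) (A B C D : Matrix (Fin n) (Fin n) E) :
    Guoeps E n δ * fromBlocks A B C D * (Guoeps E n δ)⁻¹ =
      fromBlocks A (-B) (-C) D := by
  have det_unit : IsUnit (Guoeps E n δ).det := by simp [Guoeps, det_neg, hδ]
  have eps_mul : Guoeps E n δ * fromBlocks A B C D =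
      fromBlocks A (-B) (-C) D * Guoeps E n δ := by
    simp [Guoeps, fromBlocks_multiply]
  rw [eps_mul, mul_nonsing_inv_cancel_right _ _ det_unit]

theorem gmat_mul_fromBlocks_neg_eq_one_of_mem_GuoS {σ : E → E} (hδ : δ ≠ 0)
    {α β : Matrix (Fin n) (Fin n) E} (hs : gmat σ α β ∈ GuoS E n σ δ) :
    gmat σ α β * fromBlocks α (-β) (-(β.map σ)) (α.map σ) = 1 := by
  obtain ⟨⟨-, hunit⟩, hconj⟩ := hs
  rw [← Guoeps_conj_fromBlocks hδ, ← gmat, hconj]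
  exact mul_nonsing_inv _ ((isUnit_iff_isUnit_det _).1 hunit)

theorem stmt_9_general (h2 : (2 : E) ≠ 0) (σ : E → E) (hδ : δ ≠ 0)
    {α β : Matrix (Fin n) (Fin n) E} (hu : gmat σ α β ∈ GuoUS E n σ δ) :
    IsNilpotent (α - 1) ∧ IsNilpotent (β * β.map σ) := by
  obtain ⟨⟨-, hnil⟩, hS⟩ := hu
  have hinv := gmat_mul_fromBlocks_neg_eq_one_of_mem_GuoS hδ hS
  have two_regular : IsSMulRegular E (2 : ℕ) := fun x y hxy => by simpa [h2] using hxy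
  have hα : IsNilpotent (α - 1) :=
    isNilpotent_sub_one_of_fromBlocks_mul_eq_one two_regular hnil hinv
  refine ⟨hα, ?_⟩
  rw [mul_eq_mul_self_sub_one_of_fromBlocks_mul_eq_one hinv]
  exact isNilpotent_mul_self_sub_one hα

end SymmetricSpace

/-- Guo's Lemma 3.2 (3), valid in characteristic different from 2: if `g(α,β) ∈ U_S`, then
`α` is unipotent and `β β̄` is nilpotent. -/
theorem stmt_9 (n : ℕ) (F E : Type*) [Field F] [Field E] [Algebra F E]
    (hchar : ringChar F ≠ 2) (hdim : Module.finrank F E = 2)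
    (σ : E ≃ₐ[F] E) (hσinv : ∀ x : E, σ (σ x) = x) (hσne : σ ≠ AlgEquiv.refl)
    (δ : E) (hδ0 : δ ≠ 0) (hδ2 : ∃ c : F, algebraMap F E c = δ ^ 2)
    (hδgen : Algebra.adjoin F {δ} = ⊤)
    (α β : Matrix (Fin n) (Fin n) E) (hu : gmat (⇑σ) α β ∈ GuoUS E n (⇑σ) δ) :
    IsNilpotent (α - 1) ∧ IsNilpotent (β * β.map σ) := by
  exact stmt_9_general (Ring.two_ne_zero (Algebra.ringChar_eq F E ▸ hchar)) σ hδ0 hu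
end
end

section
/- Let E/F be a quadratic extension of fields of characteristic different from 2, with nontrivial F-automorphism x ↦ x̄ of E applied entrywise to matrices. If β ∈ M_n(E) is such that β·β̄ is nilpotent, then there exists g ∈ GL_n(E) such that g β ḡ⁻¹ has all of its entries in F (equivalently, g β ḡ⁻¹ is fixed by entrywise conjugation). -/
/-!
The semilinear map `T v = β v̄` on `Eⁿ` satisfies `T² = β β̄`, so it is nilpotent, and it has a
basis of Jordan chains exactly as a nilpotent linear map does: `T` sends each basis vector to zero
or to another basis vector. In such a basis the matrix of `T`, which is `g β ḡ⁻¹` for the change of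
basis `g`, has entries `0` and `1`.
-/

open Matrix Module Submodule

section JordanChains

variable {K V : Type*} [DivisionRing K] [AddCommGroup V] [Module K V] {σ : K →+* K}
  [RingHomSurjective σ] (T : V →ₛₗ[σ] V)

lemma exists_linearIndepOn_mapsTo_of_map {R : Submodule K V} (hR : R.map T ≤ R) {s : Set V}
    (hs : LinearIndepOn K id s) (hspan : span K s = R.map T) (hT : s.MapsTo T (insert 0 s)) :
    ∃ b : Set V, LinearIndepOn K id b ∧ span K b = R ∧ b.MapsTo T (insert 0 b) := by
  -- It is enough to extend `s` to a basis of `R` inside `P`, because `P` spans `R`.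
  let P : Set V := {v ∈ R | T v ∈ insert 0 s}
  have hPR : span K P ≤ R := span_le.2 fun _ hv => hv.1
  have hsR : s ⊆ R.map T := hspan ▸ subset_span
  have hmap : R.map T ≤ (span K P).map T := by
    rw [← hspan, map_span]
    refine span_mono fun w hw => ?_
    obtain ⟨v, hv, rfl⟩ := hsR hw
    exact ⟨v, ⟨hv, Or.inr hw⟩, rfl⟩
  have hRP : R ≤ span K P := by
    intro v hv
    obtain ⟨p, hp, hpv⟩ := hmap (mem_map_of_mem hv)
    have hker : v - p ∈ P := ⟨R.sub_mem hv (hPR hp), Or.inl (by rw [map_sub, hpv, sub_self])⟩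
    simpa only [sub_add_cancel] using add_mem (subset_span hker) hp
  have hsP : s ⊆ P := fun v hv => ⟨hR (hsR hv), hT hv⟩
  obtain ⟨b, hbP, hsb, hPb, hb⟩ := exists_linearIndepOn_id_extension hs hsP
  exact ⟨b, hb, le_antisymm ((span_mono hbP).trans hPR) (hRP.trans (span_le.2 hPb)),
    fun v hv => Set.insert_subset_insert hsb (hbP hv).2⟩

lemma exists_linearIndepOn_mapsTo_of_iterate_eq_zero (N : ℕ) {R : Submodule K V}
    (hR : R.map T ≤ R) (hN : ∀ v ∈ R, T^[N] v = 0) :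
    ∃ b : Set V, LinearIndepOn K id b ∧ span K b = R ∧ b.MapsTo T (insert 0 b) := by
  induction N generalizing R with
  | zero =>
    exact ⟨∅, linearIndepOn_empty _ _, by rw [span_empty, (Submodule.eq_bot_iff R).2 hN],
      Set.mapsTo_empty _ _⟩
  | succ N ih =>
    obtain ⟨s, hs, hspan, hT⟩ := ih (map_mono hR) <| by
      rintro _ ⟨v, hv, rfl⟩
      exact hN v hv
    exact exists_linearIndepOn_mapsTo_of_map T hR hs hspan hT

theorem exists_basis_apply_mem_insert_zero_range {ι : Type*} (b₀ : Basis ι K V) {N : ℕ}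
    (hN : ∀ v, T^[N] v = 0) :
    ∃ e : Basis ι K V, ∀ i, T (e i) ∈ insert 0 (Set.range e) := by
  obtain ⟨b, hb, hspan, hT⟩ :=
    exists_linearIndepOn_mapsTo_of_iterate_eq_zero T N (R := ⊤) le_top fun v _ => hN v
  let e : Basis b K V := .mk hb (by simp [hspan])
  have he : ∀ v, e v = v := Basis.mk_apply hb _
  have hrange : Set.range e = b := by simp [Set.range_eq_iff, he]
  refine ⟨e.reindex (e.indexEquiv b₀), fun i => ?_⟩
  rw [Basis.range_reindex, hrange, Basis.reindex_apply, he]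
  exact hT (Subtype.coe_prop _)

end JordanChains

section TwistedMulVec

variable {ι R : Type*} [Fintype ι] [CommSemiring R]

/-- The `σ`-semilinear map `v ↦ A σ(v)` attached to a matrix `A`, with `σ` applied entrywise. Its
matrix in another basis is the twisted conjugate `g A σ(g)⁻¹`, where `g` is the change of basis. -/
def twistedMulVec (σ : R →+* R) (A : Matrix ι ι R) : (ι → R) →ₛₗ[σ] (ι → R) where
  toFun v := A *ᵥ (σ ∘ v)
  map_add' v w := by rw [← mulVec_add]; congr 1; ext i; simp
  map_smul' a v := by rw [← mulVec_smul]; congr 1; ext i; simp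

lemma twistedMulVec_apply (σ : R →+* R) (A : Matrix ι ι R) (v : ι → R) :
    twistedMulVec σ A v = A *ᵥ (σ ∘ v) := rfl

lemma twistedMulVec_twistedMulVec {σ : R →+* R} (hσ : Function.Involutive σ) (A : Matrix ι ι R)
    (v : ι → R) : twistedMulVec σ A (twistedMulVec σ A v) = (A * A.map σ) *ᵥ v := by
  have hσσ : σ ∘ σ ∘ v = v := by rw [← Function.comp_assoc, hσ.comp_self, Function.id_comp]
  have hcomp : σ ∘ (A *ᵥ (σ ∘ v)) = A.map σ *ᵥ v := by
    rw [← congrArg (A.map σ *ᵥ ·) hσσ]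
    exact funext (σ.map_mulVec A (σ ∘ v))
  rw [twistedMulVec_apply, twistedMulVec_apply, hcomp, mulVec_mulVec]

variable [DecidableEq ι]

lemma exists_iterate_twistedMulVec_eq_zero {σ : R →+* R} (hσ : Function.Involutive σ)
    {A : Matrix ι ι R} (hA : IsNilpotent (A * A.map σ)) :
    ∃ N, ∀ v, (twistedMulVec σ A)^[N] v = 0 := by
  obtain ⟨m, hm⟩ := hA
  have hsq : (twistedMulVec σ A)^[2] = (A * A.map σ).mulVecLin :=
    funext (twistedMulVec_twistedMulVec hσ A)
  refine ⟨2 * m, fun v => ?_⟩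
  rw [Function.iterate_mul, hsq, ← Module.End.pow_apply, ← toLin'_apply', ← toLin'_pow, hm]
  simp

lemma basis_repr_twistedMulVec {R : Type*} [CommRing R] (σ : R →+* R) (A : Matrix ι ι R)
    (e : Basis ι R (ι → R)) (i j : ι) :
    e.repr (twistedMulVec σ A (e j)) i =
      (e.toMatrix (Pi.basisFun R ι) * A * ((e.toMatrix (Pi.basisFun R ι)).map σ)⁻¹) i j := by
  have hinv : ((e.toMatrix (Pi.basisFun R ι)).map σ)⁻¹ = ((Pi.basisFun R ι).toMatrix e).map σ := by
    apply inv_eq_right_inv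
    rw [← Matrix.map_mul, e.toMatrix_mul_toMatrix_flip, Matrix.map_one σ (map_zero σ) (map_one σ)]
  rw [hinv, Matrix.mul_assoc]
  -- Both sides are entry `i` of `g (A σ(e j))`, where column `j` of `g⁻¹` is `e j`.
  exact (congrFun ((Pi.basisFun R ι).toMatrix_mulVec_repr e (twistedMulVec σ A (e j))) i).symm

end TwistedMulVec

theorem exists_isUnit_twisted_conj_mem_zero_one {ι K : Type*} [Fintype ι] [DecidableEq ι]
    [Field K] (σ : K →+* K) [RingHomSurjective σ] (β : Matrix ι ι K) {N : ℕ}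
    (hβ : ∀ v, (twistedMulVec σ β)^[N] v = 0) :
    ∃ g : Matrix ι ι K, IsUnit g ∧ ∀ i j, (g * β * (g.map σ)⁻¹) i j ∈ ({0, 1} : Set K) := by
  obtain ⟨e, he⟩ := exists_basis_apply_mem_insert_zero_range _ (Pi.basisFun K ι) hβ
  refine ⟨e.toMatrix (Pi.basisFun K ι),
    .of_mul_eq_one _ (e.toMatrix_mul_toMatrix_flip (Pi.basisFun K ι)), fun i j => ?_⟩
  rw [← basis_repr_twistedMulVec]
  obtain hzero | ⟨k, hk⟩ := he j
  · simp [hzero]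
  · rw [← hk, e.repr_self_apply]
    split_ifs <;> simp

theorem stmt_11_general {ι K : Type*} [Fintype ι] [DecidableEq ι] [Field K] (σ : K →+* K)
    (hσ : Function.Involutive σ) (β : Matrix ι ι K) (hβ : IsNilpotent (β * β.map σ)) :
    ∃ g : Matrix ι ι K, IsUnit g ∧ ∀ i j, (g * β * (g.map σ)⁻¹) i j ∈ ({0, 1} : Set K) := by
  have : RingHomSurjective σ := ⟨hσ.surjective⟩
  obtain ⟨_, hN⟩ := exists_iterate_twistedMulVec_eq_zero hσ hβ
  exact exists_isUnit_twisted_conj_mem_zero_one σ β hN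

/-- Let `E/F` be a quadratic extension of fields of characteristic different from 2, with
nontrivial `F`-automorphism `σ : x ↦ x̄` applied entrywise to matrices. If `β ∈ M_n(E)` is
such that `β β̄` is nilpotent, then there exists `g ∈ GL_n(E)` such that `g β ḡ⁻¹` has all of
its entries in `F`, equivalently is fixed by entrywise conjugation. -/
theorem stmt_11 (n : ℕ) (F E : Type*) [Field F] [Field E] [Algebra F E]
    (hchar : ringChar F ≠ 2) (hdim : Module.finrank F E = 2)
    (σ : E ≃ₐ[F] E) (hσinv : ∀ x : E, σ (σ x) = x) (hσne : σ ≠ AlgEquiv.refl)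
    (β : Matrix (Fin n) (Fin n) E) (hβ : IsNilpotent (β * β.map σ)) :
    ∃ g : Matrix (Fin n) (Fin n) E, IsUnit g ∧
      (g * β * (g.map σ)⁻¹).map σ = g * β * (g.map σ)⁻¹ ∧
      ∀ i j, (g * β * (g.map σ)⁻¹) i j ∈ Set.range (algebraMap F E) := by
  obtain ⟨g, hg, h01⟩ := stmt_11_general (σ : E →+* E) hσinv β hβ
  have hF : ∀ i j, (g * β * (g.map σ)⁻¹) i j ∈ Set.range (algebraMap F E) := fun i j =>
    Set.pair_subset (zero_mem (algebraMap F E).range) (one_mem (algebraMap F E).range) (h01 i j)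
  refine ⟨g, hg, Matrix.ext fun i j => ?_, hF⟩
  obtain ⟨c, hc⟩ := hF i j
  rw [map_apply, ← hc, σ.commutes]
end

section
/- With the notation of the setup, if g ∈ H · U_S · w · H then g⁻¹ ∈ H · U_S · w · H. -/
noncomputable section

/-!
The inverse of `h₁ u w h₂` is `h₂⁻¹ (w u⁻¹ w) w h₁⁻¹` because `w² = 1`, so everything rests on `U_S`
being stable under inversion and under conjugation by `w`. For `G` this holds because its elements
are the invertible fixed points of the involution `g ↦ w ḡ w`; for `S` because `ε` and `w`
anticommute, so that the two signs in `ε (w s w) ε⁻¹ = w (ε s ε⁻¹) w` cancel.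
-/

open Function Matrix

/-- The matrix `w = [[0, 1], [1, 0]]`, with blocks indexed by an arbitrary type `m`. Conjugation by
it interchanges the two diagonal blocks, and the two off-diagonal ones. -/
def blockSwap (m R : Type*) [DecidableEq m] [Zero R] [One R] : Matrix (m ⊕ m) (m ⊕ m) R :=
  fromBlocks 0 1 1 0

section Matrix

variable {m R S : Type*} [Fintype m] [DecidableEq m]

theorem blockSwap_mul_self [NonAssocSemiring R] : blockSwap m R * blockSwap m R = 1 := by
  simp [blockSwap, fromBlocks_multiply]

theorem blockSwap_mul_self_mul [Semiring R] (A : Matrix (m ⊕ m) (m ⊕ m) R) :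
    blockSwap m R * (blockSwap m R * A) = A := by
  rw [← mul_assoc, blockSwap_mul_self, one_mul]

theorem isUnit_blockSwap [Semiring R] : IsUnit (blockSwap m R) :=
  isUnit_iff_exists.2 ⟨_, blockSwap_mul_self, blockSwap_mul_self⟩

theorem inv_blockSwap [CommRing R] : (blockSwap m R)⁻¹ = blockSwap m R :=
  inv_eq_right_inv blockSwap_mul_self

theorem blockSwap_conj_fromBlocks [NonAssocSemiring R] (A B C D : Matrix m m R) :
    blockSwap m R * fromBlocks A B C D * blockSwap m R = fromBlocks D C B A := by
  simp [blockSwap, fromBlocks_multiply]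

theorem inv_blockSwap_conj [CommRing R] (A : Matrix (m ⊕ m) (m ⊕ m) R) :
    (blockSwap m R * A * blockSwap m R)⁻¹ = blockSwap m R * A⁻¹ * blockSwap m R := by
  rw [Matrix.mul_inv_rev, Matrix.mul_inv_rev, inv_blockSwap, mul_assoc]

theorem matrix_map_inv_of_isUnit [CommRing R] [CommRing S] (f : R →+* S) {A : Matrix m m R}
    (hA : IsUnit A) : A⁻¹.map f = (A.map f)⁻¹ := by
  refine (inv_eq_right_inv ?_).symm
  rw [← Matrix.map_mul, mul_nonsing_inv A ((isUnit_iff_isUnit_det A).1 hA)]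
  simp

end Matrix

theorem isNilpotent_units_conj {M : Type*} [MonoidWithZero M] {x : M} (hx : IsNilpotent x)
    (u : Mˣ) : IsNilpotent (u * x * ↑u⁻¹) := by
  obtain ⟨k, hk⟩ := hx
  exact ⟨k, by rw [Units.conj_pow, hk, mul_zero, zero_mul]⟩

theorem isNilpotent_units_inv_sub_one {R : Type*} [Ring R] {u : Rˣ}
    (hu : IsNilpotent ((u : R) - 1)) : IsNilpotent ((↑u⁻¹ : R) - 1) := by
  have hfactor : (↑u⁻¹ : R) - 1 = -(↑u⁻¹ * (u - 1)) := by simp [mul_sub]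
  have hcomm : Commute (↑u⁻¹ : R) (u - 1) := by simp [Commute, SemiconjBy, mul_sub, sub_mul]
  rw [hfactor]
  exact (hcomm.isNilpotent_mul_left hu).neg

section Guo

variable {E : Type*} [Field E] {n : ℕ} {σ : E →+* E} {δ : E}
  {g h s u : Matrix (Fin n ⊕ Fin n) (Fin n ⊕ Fin n) E}

theorem exists_eq_gmat_iff (hσ : Involutive σ) :
    (∃ α β : Matrix (Fin n) (Fin n) E, g = gmat σ α β) ↔
      blockSwap (Fin n) E * g.map σ * blockSwap (Fin n) E = g := by
  rw [← fromBlocks_toBlocks g, fromBlocks_map, blockSwap_conj_fromBlocks]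
  simp only [gmat, fromBlocks_inj]
  constructor
  · rintro ⟨α, β, hα, hβ, hβ', hα'⟩
    simp [hα, hβ, hβ', hα', hσ.comp_self]
  · rintro ⟨-, -, hβ, hα⟩
    exact ⟨_, _, rfl, rfl, hβ.symm, hα.symm⟩

namespace GuoG

theorem inv_mem (hσ : Involutive σ) (hg : g ∈ GuoG E n σ) : g⁻¹ ∈ GuoG E n σ := by
  obtain ⟨hform, hunit⟩ := hg
  refine ⟨(exists_eq_gmat_iff hσ).2 ?_, isUnit_nonsing_inv_iff.2 hunit⟩
  rw [matrix_map_inv_of_isUnit σ hunit, ← inv_blockSwap_conj, (exists_eq_gmat_iff hσ).1 hform]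

theorem blockSwap_conj_mem (hσ : Involutive σ) (hg : g ∈ GuoG E n σ) :
    blockSwap (Fin n) E * g * blockSwap (Fin n) E ∈ GuoG E n σ := by
  obtain ⟨⟨α, β, rfl⟩, hunit⟩ := hg
  refine ⟨⟨α.map σ, β.map σ, ?_⟩, (isUnit_blockSwap.mul hunit).mul isUnit_blockSwap⟩
  simp [gmat, blockSwap_conj_fromBlocks, hσ.comp_self]

end GuoG

theorem GuoH.inv_mem (hh : h ∈ GuoH E n σ) : h⁻¹ ∈ GuoH E n σ := by
  obtain ⟨⟨α, rfl⟩, hunit⟩ := hh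
  refine ⟨⟨α⁻¹, ?_⟩, isUnit_nonsing_inv_iff.2 hunit⟩
  rw [gmat, Matrix.map_zero _ (map_zero σ), isUnit_fromBlocks_zero₂₁] at hunit
  obtain ⟨hα, hα'⟩ := hunit
  rw [gmat, gmat, Matrix.map_zero _ (map_zero σ),
    inv_fromBlocks_zero₂₁_of_isUnit_iff _ _ _ (iff_of_true hα hα'), matrix_map_inv_of_isUnit σ hα]
  simp

theorem inv_guoeps (hδ : δ ≠ 0) : (Guoeps E n δ)⁻¹ = Guoeps E n δ⁻¹ := by
  apply inv_eq_right_inv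
  simp [Guoeps, fromBlocks_multiply, smul_smul, hδ]

theorem guoeps_mul_blockSwap :
    Guoeps E n δ * blockSwap (Fin n) E = -(blockSwap (Fin n) E * Guoeps E n δ) := by
  simp [Guoeps, blockSwap, fromBlocks_multiply, fromBlocks_smul, fromBlocks_neg]

theorem guoeps_conj_blockSwap_conj (hδ : δ ≠ 0) :
    Guoeps E n δ * (blockSwap (Fin n) E * g * blockSwap (Fin n) E) * (Guoeps E n δ)⁻¹ =
      blockSwap (Fin n) E * (Guoeps E n δ * g * (Guoeps E n δ)⁻¹) * blockSwap (Fin n) E := by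
  rw [inv_guoeps hδ]
  have hright : blockSwap (Fin n) E * Guoeps E n δ⁻¹ =
      -(Guoeps E n δ⁻¹ * blockSwap (Fin n) E) := by
    rw [guoeps_mul_blockSwap, neg_neg]
  calc
    _ = (Guoeps E n δ * blockSwap (Fin n) E) * g *
        (blockSwap (Fin n) E * Guoeps E n δ⁻¹) := by simp only [mul_assoc]
    _ = _ := by
      rw [guoeps_mul_blockSwap, hright]
      simp only [neg_mul, mul_neg, neg_neg, mul_assoc]

namespace GuoS

theorem inv_mem (hσ : Involutive σ) (hδ : δ ≠ 0) (hs : s ∈ GuoS E n σ δ) :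
    s⁻¹ ∈ GuoS E n σ δ := by
  refine ⟨GuoG.inv_mem hσ hs.1, ?_⟩
  calc
    Guoeps E n δ * s⁻¹ * (Guoeps E n δ)⁻¹ = (Guoeps E n δ * s * (Guoeps E n δ)⁻¹)⁻¹ := by
      rw [Matrix.mul_inv_rev, Matrix.mul_inv_rev, inv_guoeps hδ, inv_guoeps (inv_ne_zero hδ),
        inv_inv, mul_assoc]
    _ = s⁻¹⁻¹ := by rw [hs.2]

theorem blockSwap_conj_mem (hσ : Involutive σ) (hδ : δ ≠ 0) (hs : s ∈ GuoS E n σ δ) :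
    blockSwap (Fin n) E * s * blockSwap (Fin n) E ∈ GuoS E n σ δ :=
  ⟨GuoG.blockSwap_conj_mem hσ hs.1, by
    rw [guoeps_conj_blockSwap_conj hδ, hs.2, inv_blockSwap_conj]⟩

end GuoS

namespace GuoU

theorem inv_mem (hσ : Involutive σ) (hu : u ∈ GuoU E n σ) : u⁻¹ ∈ GuoU E n σ := by
  refine ⟨GuoG.inv_mem hσ hu.1, ?_⟩
  obtain ⟨⟨-, v, rfl⟩, hnil⟩ := hu
  rw [← coe_units_inv]
  exact isNilpotent_units_inv_sub_one hnil

theorem blockSwap_conj_mem (hσ : Involutive σ) (hu : u ∈ GuoU E n σ) :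
    blockSwap (Fin n) E * u * blockSwap (Fin n) E ∈ GuoU E n σ := by
  refine ⟨GuoG.blockSwap_conj_mem hσ hu.1, ?_⟩
  have hconj := isNilpotent_units_conj hu.2
    ⟨blockSwap (Fin n) E, blockSwap (Fin n) E, blockSwap_mul_self, blockSwap_mul_self⟩
  simpa [mul_sub, sub_mul, blockSwap_mul_self] using hconj

end GuoU

namespace GuoUS

theorem inv_mem (hσ : Involutive σ) (hδ : δ ≠ 0) (hu : u ∈ GuoUS E n σ δ) :
    u⁻¹ ∈ GuoUS E n σ δ :=
  ⟨GuoU.inv_mem hσ hu.1, GuoS.inv_mem hσ hδ hu.2⟩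

theorem blockSwap_conj_mem (hσ : Involutive σ) (hδ : δ ≠ 0) (hu : u ∈ GuoUS E n σ δ) :
    blockSwap (Fin n) E * u * blockSwap (Fin n) E ∈ GuoUS E n σ δ :=
  ⟨GuoU.blockSwap_conj_mem hσ hu.1, GuoS.blockSwap_conj_mem hσ hδ hu.2⟩

end GuoUS

end Guo

theorem stmt_13_general {E : Type*} [Field E] {n : ℕ} {σ : E →+* E} (hσ : Involutive σ)
    {δ : E} (hδ : δ ≠ 0) {g : Matrix (Fin n ⊕ Fin n) (Fin n ⊕ Fin n) E}
    (hg : ∃ h₁ ∈ GuoH E n σ, ∃ u ∈ GuoUS E n σ δ, ∃ h₂ ∈ GuoH E n σ,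
      g = h₁ * u * blockSwap (Fin n) E * h₂) :
    ∃ h₁ ∈ GuoH E n σ, ∃ u ∈ GuoUS E n σ δ, ∃ h₂ ∈ GuoH E n σ,
      g⁻¹ = h₁ * u * blockSwap (Fin n) E * h₂ := by
  obtain ⟨h₁, hh₁, u, hu, h₂, hh₂, rfl⟩ := hg
  refine ⟨h₂⁻¹, GuoH.inv_mem hh₂, blockSwap (Fin n) E * u⁻¹ * blockSwap (Fin n) E,
    GuoUS.blockSwap_conj_mem hσ hδ (GuoUS.inv_mem hσ hδ hu), h₁⁻¹, GuoH.inv_mem hh₁, ?_⟩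
  simp only [Matrix.mul_inv_rev, inv_blockSwap, mul_assoc, blockSwap_mul_self_mul]

/-- Guo's Lemma 3.3 (second statement), in characteristic different from 2: with
`w = [[0, I_n], [I_n, 0]]`, if `g ∈ H U_S w H` then `g⁻¹ ∈ H U_S w H`. -/
theorem stmt_13 (n : ℕ) (F E : Type*) [Field F] [Field E] [Algebra F E]
    (hchar : ringChar F ≠ 2) (hdim : Module.finrank F E = 2)
    (σ : E ≃ₐ[F] E) (hσinv : ∀ x : E, σ (σ x) = x) (hσne : σ ≠ AlgEquiv.refl)
    (δ : E) (hδ0 : δ ≠ 0) (hδ2 : ∃ c : F, algebraMap F E c = δ ^ 2)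
    (hδgen : Algebra.adjoin F {δ} = ⊤)
    (w : Matrix (Fin n ⊕ Fin n) (Fin n ⊕ Fin n) E)
    (hw : w = Matrix.fromBlocks 0 1 1 0)
    (g : Matrix (Fin n ⊕ Fin n) (Fin n ⊕ Fin n) E)
    (hg : ∃ h₁ ∈ GuoH E n (⇑σ), ∃ u ∈ GuoUS E n (⇑σ) δ, ∃ h₂ ∈ GuoH E n (⇑σ),
      g = h₁ * u * w * h₂) :
    ∃ h₁ ∈ GuoH E n (⇑σ), ∃ u ∈ GuoUS E n (⇑σ) δ, ∃ h₂ ∈ GuoH E n (⇑σ),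
      g⁻¹ = h₁ * u * w * h₂ := by
  subst hw
  exact stmt_13_general (σ := (σ : E →+* E)) hσinv hδ0 hg
end
end
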